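/- Let 0 < α < 1 and 0 < p < 1 with p ≠ 1/2 be fixed, and let k_n be the integers from the two-point concentration of F_n(α) (so that k_n = log_{1/√(pq)} n − (|ln(p/q)| / (2 ln^{3/2}(1/√(pq)))) · Φ^{-1}(α) · √(ln n) + O(1)). Then E[X̄_{k_n}] = α + O(1/√(log n)); i.e., there is a constant C such that |E[X̄_{k_n}] − α| ≤ C/√(log n) for all n ≥ 2. -/

import Mathlib

/-!
Partial fillup in tries (Janson–Szpankowski), Theorem 1 (two-point concentration
of the α-fillup level `F_n(α)`).

Model: an outcome `ω : ℕ → ℕ → Bool` encodes infinitely many strings, where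
`ω i j` is the `j`-th bit of the `i`-th string; the measure `ν` makes all bits
i.i.d. with `P(bit = 1) = p`.  The trie on `n` strings uses strings `0,…,n-1`.
-/

open MeasureTheory ProbabilityTheory Real Filter

/-- The number of strings among the first `n` (encoded in `ω`) whose first `k` bits
form the word `r ∈ {0,1}^k`. -/
def prefCount (ω : ℕ → ℕ → Bool) (n k : ℕ) (r : Fin k → Bool) : ℕ :=
  ((Finset.range n).filter fun i => ∀ j : Fin k, ω i j = r j).card

/-- `X_k`: the number of words `r ∈ {0,1}^k` that are prefixes of at least two of the
first `n` strings. -/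
def fillCount (ω : ℕ → ℕ → Bool) (n k : ℕ) : ℕ :=
  (Finset.univ.filter fun r : Fin k → Bool => 2 ≤ prefCount ω n k r).card

/-- `X̄_k = X_k / 2^k`, the proportion of filled words at level `k`. -/
noncomputable def fracFilled (ω : ℕ → ℕ → Bool) (n k : ℕ) : ℝ :=
  (fillCount ω n k : ℝ) / 2 ^ k

/-- The α-fillup level `F_n(α) = max {k : X̄_k ≥ α}`. -/
noncomputable def fillupLevel (α : ℝ) (ω : ℕ → ℕ → Bool) (n : ℕ) : ℕ :=
  sSup {k | α ≤ fracFilled ω n k}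

/-- `ν` is a probability measure on `ℕ → ℕ → Bool` under which all the bits
`ω i j` are i.i.d. with `P(bit = 1) = p` (characterized by cylinder probabilities). -/
def IIDBits (p : ℝ) (ν : Measure (ℕ → ℕ → Bool)) : Prop :=
  IsProbabilityMeasure ν ∧
    ∀ (S : Finset (ℕ × ℕ)) (b : ℕ × ℕ → Bool),
      ν {ω | ∀ s ∈ S, ω s.1 s.2 = b s} =
        ∏ s ∈ S, ENNReal.ofReal (if b s then p else 1 - p)

/-!
The mean of `X̄_k` is the average, over the words `r` of length `k`, of the probability that a
binomial variable with parameters `n` and `P(r)` is at least `2`. Occupancy counts of disjoint cells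
are negatively dependent, so `Var X̄_k ≤ 2⁻ᵏ` and `F_n(α)` is governed by these means.

Group the words by their number `j` of ones. Then `n P(r)` is geometric in `j`, so the probability
switches from `0` to `1` over a bounded range of `j`, and the mean is a tail of the symmetric
binomial distribution up to `O(1/√k)`. Wallis' product and the ratios of successive binomial
coefficients turn this tail into `Φ`. Near the transition the mean falls by at least `c/√k` from
each level to the next, which exceeds both the step `1/log n` by which `k_n` overshoots `α` and the
fluctuations of `X̄_k`; hence two consecutive levels carry `F_n(α)`.
-/

namespace Fillup

section Occupancy

variable {T : Type*} {A B : Set T} {n : ℕ}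

/-- The occupancy count of a cell `A`: the number of the points `v 0, …, v (n - 1)` in `A`. -/
noncomputable def hits (A : Set T) (v : Fin n → T) : ℕ :=
  ∑ i, A.indicator 1 (v i)

lemma hits_le (A : Set T) (v : Fin n → T) : hits A v ≤ n := by
  calc hits A v ≤ ∑ _i : Fin n, 1 :=
        Finset.sum_le_sum fun i _ ↦ Set.indicator_apply_le' (fun _ ↦ le_rfl) fun _ ↦ zero_le_one
    _ = n := by simp

lemma hits_cons (A : Set T) (t : T) (v : Fin n → T) :
    hits A (Fin.cons t v : Fin (n + 1) → T) = A.indicator 1 t + hits A v := by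
  simp [hits, Fin.sum_univ_succ]

variable [MeasurableSpace T]

lemma measurable_hits (hA : MeasurableSet A) : Measurable (hits A : (Fin n → T) → ℕ) :=
  Finset.measurable_fun_sum _ fun i _ ↦
    (measurable_one.indicator hA).comp (measurable_pi_apply i)

variable {μ : Measure T} [IsProbabilityMeasure μ]

lemma integrable_comp_hits (hA : MeasurableSet A) (hB : MeasurableSet B) (Ψ : ℕ → ℕ → ℝ) :
    Integrable (fun v ↦ Ψ (hits A v) (hits B v)) (Measure.pi fun _ : Fin n ↦ μ) := by
  have hmeas : Measurable fun v : Fin n → T ↦ Ψ (hits A v) (hits B v) :=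
    (Measurable.of_discrete (f := fun ab : ℕ × ℕ ↦ Ψ ab.1 ab.2)).comp
      ((measurable_hits hA).prodMk (measurable_hits hB))
  refine .of_bound hmeas.aestronglyMeasurable
    (∑ a ∈ Finset.range (n + 1), ∑ b ∈ Finset.range (n + 1), ‖Ψ a b‖) (.of_forall fun v ↦ ?_)
  have ha : hits A v ∈ Finset.range (n + 1) := Finset.mem_range_succ_iff.2 (hits_le A v)
  have hb : hits B v ∈ Finset.range (n + 1) := Finset.mem_range_succ_iff.2 (hits_le B v)
  calc ‖Ψ (hits A v) (hits B v)‖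
      ≤ ∑ b ∈ Finset.range (n + 1), ‖Ψ (hits A v) b‖ :=
        Finset.single_le_sum (f := fun b ↦ ‖Ψ (hits A v) b‖) (fun _ _ ↦ norm_nonneg _) hb
    _ ≤ _ := Finset.single_le_sum (f := fun a ↦ ∑ b ∈ Finset.range (n + 1), ‖Ψ a b‖)
        (fun _ _ ↦ Finset.sum_nonneg fun _ _ ↦ norm_nonneg _) ha

lemma integral_pi_succ {F : (Fin (n + 1) → T) → ℝ}
    (hF : Integrable F (Measure.pi fun _ : Fin (n + 1) ↦ μ)) :
    ∫ v, F v ∂(Measure.pi fun _ : Fin (n + 1) ↦ μ) =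
      ∫ v, ∫ t, F (Fin.cons t v : Fin (n + 1) → T) ∂μ ∂(Measure.pi fun _ : Fin n ↦ μ) := by
  have hpres := (measurePreserving_piFinSuccAbove (fun _ : Fin (n + 1) ↦ μ) 0).symm
  rw [← hpres.integral_comp', integral_prod_symm]
  · simp [MeasurableEquiv.piFinSuccAbove_symm_apply, Fin.insertNthEquiv]
  · exact (hpres.integrable_comp_emb (MeasurableEquiv.measurableEmbedding _)).2 hF

-- Condition on the cell of the first point: it lies in `A`, in `B`, or in neither.
lemma integral_comp_hits_succ (hA : MeasurableSet A) (hB : MeasurableSet B)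
    (hAB : Disjoint A B) (Ψ : ℕ → ℕ → ℝ) :
    ∫ v, Ψ (hits A v) (hits B v) ∂(Measure.pi fun _ : Fin (n + 1) ↦ μ) =
      μ.real A * ∫ v, Ψ (hits A v + 1) (hits B v) ∂(Measure.pi fun _ : Fin n ↦ μ) +
      μ.real B * ∫ v, Ψ (hits A v) (hits B v + 1) ∂(Measure.pi fun _ : Fin n ↦ μ) +
      (1 - μ.real A - μ.real B) *
        ∫ v, Ψ (hits A v) (hits B v) ∂(Measure.pi fun _ : Fin n ↦ μ) := by
  have hfirst (a b : ℕ) : ∫ t, Ψ (A.indicator 1 t + a) (B.indicator 1 t + b) ∂μ =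
      μ.real A * Ψ (a + 1) b + μ.real B * Ψ a (b + 1) + (1 - μ.real A - μ.real B) * Ψ a b := by
    have hsplit (t : T) : Ψ (A.indicator 1 t + a) (B.indicator 1 t + b) =
        A.indicator (fun _ ↦ Ψ (a + 1) b - Ψ a b) t +
          B.indicator (fun _ ↦ Ψ a (b + 1) - Ψ a b) t + Ψ a b := by
      by_cases hta : t ∈ A
      · simp [hta, Set.disjoint_left.1 hAB hta, add_comm]
      · by_cases htb : t ∈ B <;> simp [hta, htb, add_comm]
    have hAi : Integrable (A.indicator fun _ ↦ Ψ (a + 1) b - Ψ a b) μ :=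
      (integrable_const _).indicator hA
    have hBi : Integrable (B.indicator fun _ ↦ Ψ a (b + 1) - Ψ a b) μ :=
      (integrable_const _).indicator hB
    simp_rw [hsplit]
    rw [integral_add (hAi.fun_add hBi) (integrable_const _), integral_add hAi hBi,
      integral_indicator_const _ hA, integral_indicator_const _ hB, integral_const, probReal_univ]
    simp only [smul_eq_mul]
    ring
  rw [integral_pi_succ (integrable_comp_hits hA hB Ψ)]
  simp_rw [hits_cons, hfirst]
  have hintA := (integrable_comp_hits (n := n) (μ := μ) hA hB fun a b ↦ Ψ (a + 1) b).const_mul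
    (μ.real A)
  have hintB := (integrable_comp_hits (n := n) (μ := μ) hA hB fun a b ↦ Ψ a (b + 1)).const_mul
    (μ.real B)
  rw [integral_add (hintA.fun_add hintB) ((integrable_comp_hits hA hB Ψ).const_mul _),
    integral_add hintA hintB]
  simp_rw [integral_const_mul]

lemma integral_comp_hits_succ_single (hA : MeasurableSet A) (f : ℕ → ℝ) :
    ∫ v, f (hits A v) ∂(Measure.pi fun _ : Fin (n + 1) ↦ μ) =
      μ.real A * ∫ v, f (hits A v + 1) ∂(Measure.pi fun _ : Fin n ↦ μ) +
      (1 - μ.real A) * ∫ v, f (hits A v) ∂(Measure.pi fun _ : Fin n ↦ μ) := by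
  simpa using integral_comp_hits_succ (n := n) (μ := μ) hA .empty (Set.disjoint_empty A)
    fun a _ ↦ f a

lemma integral_comp_hits_mono (hA : MeasurableSet A) {f g : ℕ → ℝ} (hfg : ∀ a, f a ≤ g a) :
    ∫ v, f (hits A v) ∂(Measure.pi fun _ : Fin n ↦ μ) ≤
      ∫ v, g (hits A v) ∂(Measure.pi fun _ : Fin n ↦ μ) :=
  integral_mono (integrable_comp_hits hA hA fun a _ ↦ f a)
    (integrable_comp_hits hA hA fun a _ ↦ g a) fun _ ↦ hfg _

-- Conditioning on the first point, the two sides differ by the inductive hypotheses and by the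
-- cross term `μ(A) μ(B) (E f(· + 1) - E f) (E g(· + 1) - E g)`, which is nonnegative.
lemma integral_comp_hits_mul_le (hA : MeasurableSet A) (hB : MeasurableSet B)
    (hAB : Disjoint A B) {f g : ℕ → ℝ} (hf : Monotone f) (hg : Monotone g) :
    ∫ v, f (hits A v) * g (hits B v) ∂(Measure.pi fun _ : Fin n ↦ μ) ≤
      (∫ v, f (hits A v) ∂(Measure.pi fun _ : Fin n ↦ μ)) *
        ∫ v, g (hits B v) ∂(Measure.pi fun _ : Fin n ↦ μ) := by
  induction n generalizing f g with
  | zero => simp [hits]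
  | succ n ih =>
    have hf' : Monotone fun a ↦ f (a + 1) := fun a b hab ↦ hf (by gcongr)
    have hg' : Monotone fun a ↦ g (a + 1) := fun a b hab ↦ hg (by gcongr)
    have hΔf := integral_comp_hits_mono (n := n) (μ := μ) hA fun a ↦ hf a.le_succ
    have hΔg := integral_comp_hits_mono (n := n) (μ := μ) hB fun a ↦ hg a.le_succ
    have hrest : 0 ≤ 1 - μ.real A - μ.real B := by
      have := measureReal_union (μ := μ) hAB hB ▸ measureReal_le_one (μ := μ) (s := A ∪ B)
      linarith
    rw [integral_comp_hits_succ hA hB hAB fun a b ↦ f a * g b, integral_comp_hits_succ_single hA,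
      integral_comp_hits_succ_single hB]
    have hinA := mul_le_mul_of_nonneg_left (ih hf' hg) (measureReal_nonneg (μ := μ) (s := A))
    have hinB := mul_le_mul_of_nonneg_left (ih hf hg') (measureReal_nonneg (μ := μ) (s := B))
    have hout := mul_le_mul_of_nonneg_left (ih hf hg) hrest
    have hcross := mul_nonneg (mul_nonneg (measureReal_nonneg (μ := μ) (s := A))
      (measureReal_nonneg (μ := μ) (s := B))) (mul_nonneg (sub_nonneg.2 hΔf) (sub_nonneg.2 hΔg))
    simp only [Nat.succ_eq_add_one] at hcross
    linarith

lemma memLp_comp_hits (hA : MeasurableSet A) (f : ℕ → ℝ) :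
    MemLp (fun v ↦ f (hits A v)) 2 (Measure.pi fun _ : Fin n ↦ μ) :=
  (memLp_two_iff_integrable_sq
    (integrable_comp_hits hA hA fun a _ ↦ f a).aestronglyMeasurable).2
    (integrable_comp_hits hA hA fun a _ ↦ f a ^ 2)

lemma covariance_comp_hits_nonpos (hA : MeasurableSet A) (hB : MeasurableSet B)
    (hAB : Disjoint A B) {f g : ℕ → ℝ} (hf : Monotone f) (hg : Monotone g) :
    cov[fun v ↦ f (hits A v), fun v ↦ g (hits B v); Measure.pi fun _ : Fin n ↦ μ] ≤ 0 := by
  rw [covariance_eq_sub (memLp_comp_hits hA f) (memLp_comp_hits hB g)]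
  exact sub_nonpos.2 (integral_comp_hits_mul_le hA hB hAB hf hg)

lemma variance_sum_comp_hits_le {ι : Type*} [Fintype ι] {A : ι → Set T}
    (hA : ∀ r, MeasurableSet (A r)) (hdisj : Pairwise (Function.onFun Disjoint A))
    {f : ℕ → ℝ} (hf : Monotone f) (hf01 : ∀ a, f a ∈ Set.Icc 0 1) :
    Var[fun v ↦ ∑ r, f (hits (A r) v); Measure.pi fun _ : Fin n ↦ μ] ≤ Fintype.card ι := by
  classical
  have hvar (r : ι) : Var[fun v ↦ f (hits (A r) v); Measure.pi fun _ : Fin n ↦ μ] ≤ 1 := by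
    refine (variance_le_sq_of_bounded (.of_forall fun v ↦ hf01 (hits (A r) v))
      (memLp_comp_hits (hA r) f).aemeasurable).trans ?_
    norm_num
  rw [variance_fun_sum fun r ↦ memLp_comp_hits (hA r) f]
  calc ∑ r, ∑ s, cov[fun v ↦ f (hits (A r) v), fun v ↦ f (hits (A s) v);
        Measure.pi fun _ : Fin n ↦ μ]
      ≤ ∑ r, ∑ s, if r = s then (1 : ℝ) else 0 := by
        refine Finset.sum_le_sum fun r _ ↦ Finset.sum_le_sum fun s _ ↦ ?_
        split_ifs with hrs
        · subst hrs
          rw [covariance_self (memLp_comp_hits (hA r) f).aemeasurable]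
          exact hvar r
        · exact covariance_comp_hits_nonpos (hA r) (hA s) (hdisj hrs) hf hf
    _ = Fintype.card ι := by simp

end Occupancy

section AtLeastTwo

/-- The probability that at least two of `n` independent trials, each of success probability `x`,
succeed. -/
noncomputable def atLeastTwo (n : ℕ) (x : ℝ) : ℝ :=
  1 - ((1 - x) ^ n + n * x * (1 - x) ^ (n - 1))

variable {T : Type*} [MeasurableSpace T] {μ : Measure T} [IsProbabilityMeasure μ] {A : Set T}

lemma integral_one_le_hits (n : ℕ) (hA : MeasurableSet A) :
    ∫ v, (if 1 ≤ hits A v then 1 else 0 : ℝ) ∂(Measure.pi fun _ : Fin n ↦ μ) =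
      1 - (1 - μ.real A) ^ n := by
  induction n with
  | zero => simp [hits]
  | succ n ih =>
    rw [integral_comp_hits_succ_single hA fun a ↦ if 1 ≤ a then (1 : ℝ) else 0, ih]
    simp only [Nat.le_add_left, if_true, integral_const, probReal_univ, smul_eq_mul]
    ring

lemma integral_two_le_hits (n : ℕ) (hA : MeasurableSet A) :
    ∫ v, (if 2 ≤ hits A v then 1 else 0 : ℝ) ∂(Measure.pi fun _ : Fin n ↦ μ) =
      atLeastTwo n (μ.real A) := by
  induction n with
  | zero => simp [hits, atLeastTwo]
  | succ n ih =>
    rw [integral_comp_hits_succ_single hA fun a ↦ if 2 ≤ a then (1 : ℝ) else 0, ih]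
    simp only [Nat.reduceLeDiff, integral_one_le_hits n hA, atLeastTwo]
    rcases n with - | n
    · simp
    · push_cast
      ring

end AtLeastTwo

section Words

/-- The probability that a random string with `P(bit = 1) = p` starts with the word `r`. -/
def wordProb (p : ℝ) {k : ℕ} (r : Fin k → Bool) : ℝ :=
  ∏ j, if r j then p else 1 - p

/-- The average of `f (P(r))` over all words `r` of length `k`, where `P(r) = wordProb p r`. -/
noncomputable def wordAvg (p : ℝ) (k : ℕ) (f : ℝ → ℝ) : ℝ :=
  (∑ r : Fin k → Bool, f (wordProb p r)) / 2 ^ k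

/-- The prefixes of length `k` of the first `n` strings of the outcome `ω`. -/
def prefixes (n k : ℕ) (ω : ℕ → ℕ → Bool) : Fin n → Fin k → Bool :=
  fun i j ↦ ω i j

/-- The proportion of the cells `{r}`, over all words `r` of length `k`, occupied by at least two
of the words `v 0, …, v (n - 1)`. -/
noncomputable def fracHitTwice {n k : ℕ} (v : Fin n → Fin k → Bool) : ℝ :=
  (∑ r : Fin k → Bool, if 2 ≤ hits {r} v then 1 else 0) / 2 ^ k

lemma prefCount_eq_hits (ω : ℕ → ℕ → Bool) (n k : ℕ) (r : Fin k → Bool) :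
    prefCount ω n k r = hits {r} (prefixes n k ω) := by
  simp only [prefCount, hits, prefixes, Finset.card_filter, Finset.sum_range, Set.indicator_apply,
    Set.mem_singleton_iff, funext_iff, Pi.one_apply]

lemma fracFilled_eq_fracHitTwice (ω : ℕ → ℕ → Bool) (n k : ℕ) :
    fracFilled ω n k = fracHitTwice (prefixes n k ω) := by
  simp only [fracFilled, fillCount, fracHitTwice, prefCount_eq_hits, Finset.card_filter,
    Nat.cast_sum, Nat.cast_ite, Nat.cast_one, Nat.cast_zero]

@[fun_prop]
lemma measurable_prefixes (n k : ℕ) : Measurable (prefixes n k) := by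
  unfold prefixes
  fun_prop

lemma measurable_fracFilled (n k : ℕ) : Measurable fun ω ↦ fracFilled ω n k := by
  simp_rw [fracFilled_eq_fracHitTwice]
  exact (Measurable.of_discrete (f := fracHitTwice)).comp (measurable_prefixes n k)

lemma fracFilled_mem_Icc (ω : ℕ → ℕ → Bool) (n k : ℕ) : fracFilled ω n k ∈ Set.Icc 0 1 := by
  refine ⟨by unfold fracFilled; positivity, div_le_one_of_le₀ ?_ (by positivity)⟩
  have hcard : fillCount ω n k ≤ Fintype.card (Fin k → Bool) := Finset.card_filter_le _ _
  rw [Fintype.card_fun, Fintype.card_bool, Fintype.card_fin] at hcard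
  exact_mod_cast hcard

lemma fillCount_succ_le (ω : ℕ → ℕ → Bool) (n k : ℕ) :
    fillCount ω n (k + 1) ≤ 2 * fillCount ω n k := by
  have hinj : fillCount ω n (k + 1) ≤ ((Finset.univ : Finset Bool) ×ˢ
      Finset.univ.filter fun r : Fin k → Bool ↦ 2 ≤ prefCount ω n k r).card := by
    refine Finset.card_le_card_of_injOn (fun r ↦ (r (Fin.last k), Fin.init r)) (fun r hr ↦ ?_)
      fun r _ s _ hrs ↦ ?_
    · have hr' : 2 ≤ prefCount ω n (k + 1) r := by simpa using hr
      have hle : prefCount ω n (k + 1) r ≤ prefCount ω n k (Fin.init r) :=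
        Finset.card_le_card <| Finset.monotone_filter_right _ fun i _ hi j ↦ hi j.castSucc
      simpa using hr'.trans hle
    · obtain ⟨hlast, hinit⟩ := Prod.mk.inj hrs
      rw [← Fin.snoc_init_self r, ← Fin.snoc_init_self s, hinit, hlast]
  simpa [Finset.card_product, fillCount] using hinj

lemma antitone_fracFilled (ω : ℕ → ℕ → Bool) (n : ℕ) : Antitone (fracFilled ω n) := by
  refine antitone_nat_of_succ_le fun k ↦ ?_
  have hsucc : (fillCount ω n (k + 1) : ℝ) ≤ 2 * fillCount ω n k := by
    exact_mod_cast fillCount_succ_le ω n k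
  calc fracFilled ω n (k + 1) ≤ 2 * fillCount ω n k / 2 ^ (k + 1) := by
        unfold fracFilled; gcongr
    _ = fracFilled ω n k := by rw [fracFilled, pow_succ']; field_simp

lemma fillupLevel_eq_or_eq_succ {ω : ℕ → ℕ → Bool} {n k : ℕ} {α : ℝ}
    (hk : α ≤ fracFilled ω n k) (hk2 : fracFilled ω n (k + 2) < α) :
    fillupLevel α ω n = k ∨ fillupLevel α ω n = k + 1 := by
  have hub : k + 1 ∈ upperBounds {j | α ≤ fracFilled ω n j} := fun j hj ↦ by
    by_contra! hlt
    exact (hj.trans (antitone_fracFilled ω n hlt)).not_gt hk2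
  have hle : fillupLevel α ω n ≤ k + 1 := csSup_le ⟨k, hk⟩ hub
  have hge : k ≤ fillupLevel α ω n := le_csSup ⟨k + 1, hub⟩ hk
  omega

end Words

section RandomStrings

variable {p : ℝ} {ν : Measure (ℕ → ℕ → Bool)} {n k : ℕ}

lemma ofReal_wordProb (hp : 0 ≤ p) (hp1 : p ≤ 1) (r : Fin k → Bool) :
    ENNReal.ofReal (wordProb p r) = ∏ j, ENNReal.ofReal (if r j then p else 1 - p) :=
  ENNReal.ofReal_prod_of_nonneg fun j _ ↦ by split_ifs <;> linarith

lemma _root_.IIDBits.measure_prefixes_eq (hν : IIDBits p ν) (hp : 0 ≤ p) (hp1 : p ≤ 1)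
    (v : Fin n → Fin k → Bool) :
    ν (prefixes n k ⁻¹' {v}) = ∏ i, ENNReal.ofReal (wordProb p (v i)) := by
  let e : Fin n × Fin k ↪ ℕ × ℕ :=
    ⟨Prod.map Fin.val Fin.val, Fin.val_injective.prodMap Fin.val_injective⟩
  have hcyl := hν.2 (Finset.univ.map e) (Function.extend e (fun ij ↦ v ij.1 ij.2) fun _ ↦ false)
  simp only [Finset.prod_map, Finset.forall_mem_map, e.injective.extend_apply,
    Fintype.prod_prod_type] at hcyl
  simp_rw [ofReal_wordProb hp hp1, ← hcyl]
  congr 1 with ω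
  simp [prefixes, funext_iff, e]

/-- The law of the prefix of length `k` of one string. -/
noncomputable def prefixLaw (ν : Measure (ℕ → ℕ → Bool)) (k : ℕ) : Measure (Fin k → Bool) :=
  ν.map fun ω ↦ prefixes 1 k ω 0

lemma _root_.IIDBits.prefixLaw_singleton (hν : IIDBits p ν) (hp : 0 ≤ p) (hp1 : p ≤ 1)
    (r : Fin k → Bool) : prefixLaw ν k {r} = ENNReal.ofReal (wordProb p r) := by
  rw [prefixLaw, Measure.map_apply (by fun_prop) (measurableSet_singleton r)]
  have hpre : (fun ω ↦ prefixes 1 k ω 0) ⁻¹' {r} = prefixes 1 k ⁻¹' {fun _ ↦ r} := by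
    ext ω
    simp [funext_iff]
  rw [hpre, hν.measure_prefixes_eq hp hp1]
  simp

lemma _root_.IIDBits.isProbabilityMeasure_prefixLaw (hν : IIDBits p ν) :
    IsProbabilityMeasure (prefixLaw ν k) :=
  have := hν.1
  Measure.isProbabilityMeasure_map (by fun_prop)

lemma _root_.IIDBits.map_prefixes (hν : IIDBits p ν) (hp : 0 ≤ p) (hp1 : p ≤ 1) :
    ν.map (prefixes n k) = Measure.pi fun _ ↦ prefixLaw ν k := by
  have := hν.isProbabilityMeasure_prefixLaw (k := k)
  refine Measure.ext_of_singleton fun v ↦ ?_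
  rw [Measure.map_apply (by fun_prop) (measurableSet_singleton v), Measure.pi_singleton,
    hν.measure_prefixes_eq hp hp1]
  simp_rw [hν.prefixLaw_singleton hp hp1]

lemma wordProb_nonneg (hp : 0 ≤ p) (hp1 : p ≤ 1) (r : Fin k → Bool) : 0 ≤ wordProb p r :=
  Finset.prod_nonneg fun _ _ ↦ by split_ifs <;> linarith

lemma _root_.IIDBits.integral_fracFilled (hν : IIDBits p ν) (hp : 0 ≤ p) (hp1 : p ≤ 1) (n k : ℕ) :
    ∫ ω, fracFilled ω n k ∂ν = wordAvg p k (atLeastTwo n) := by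
  have := hν.isProbabilityMeasure_prefixLaw (k := k)
  simp_rw [fracFilled_eq_fracHitTwice]
  rw [← integral_map (φ := prefixes n k) (by fun_prop) Measurable.of_discrete.aestronglyMeasurable,
    hν.map_prefixes hp hp1]
  unfold fracHitTwice
  rw [integral_div, integral_finsetSum _ fun r _ ↦ .of_finite, wordAvg]
  simp_rw [integral_two_le_hits n (measurableSet_singleton _), measureReal_def,
    hν.prefixLaw_singleton hp hp1, ENNReal.toReal_ofReal (wordProb_nonneg hp hp1 _)]

lemma _root_.IIDBits.variance_fracFilled_le (hν : IIDBits p ν) (hp : 0 ≤ p) (hp1 : p ≤ 1)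
    (n k : ℕ) :
    Var[fun ω ↦ fracFilled ω n k; ν] ≤ 1 / 2 ^ k := by
  have := hν.isProbabilityMeasure_prefixLaw (k := k)
  have hcomp : (fun ω ↦ fracFilled ω n k) = fracHitTwice ∘ prefixes n k :=
    funext fun ω ↦ fracFilled_eq_fracHitTwice ω n k
  rw [hcomp, ← variance_map Measurable.of_discrete.aemeasurable (by fun_prop),
    hν.map_prefixes hp hp1]
  have hvar := variance_sum_comp_hits_le (n := n) (μ := prefixLaw ν k)
    (A := fun r : Fin k → Bool ↦ {r}) (f := fun a ↦ if 2 ≤ a then (1 : ℝ) else 0)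
    measurableSet_singleton (fun r s hrs ↦ Set.disjoint_singleton.2 hrs)
    (fun a b hab ↦ by dsimp only; split_ifs <;> first | omega | norm_num)
    (fun a ↦ by split_ifs <;> norm_num)
  unfold fracHitTwice
  simp_rw [div_eq_mul_inv]
  rw [variance_mul_const]
  calc _ ≤ (2 ^ k : ℝ) * ((2 ^ k : ℝ)⁻¹) ^ 2 := by
        gcongr
        simpa using hvar
    _ = 1 * (2 ^ k : ℝ)⁻¹ := by field_simp

lemma _root_.IIDBits.measureReal_le_abs_fracFilled_sub (hν : IIDBits p ν) (hp : 0 ≤ p) (hp1 : p ≤ 1)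
    (n k : ℕ) {ε : ℝ} (hε : 0 < ε) :
    ν.real {ω | ε ≤ |fracFilled ω n k - wordAvg p k (atLeastTwo n)|} ≤ 1 / (2 ^ k * ε ^ 2) := by
  have := hν.1
  have hL2 : MemLp (fun ω ↦ fracFilled ω n k) 2 ν :=
    memLp_of_bounded (.of_forall fun ω ↦ fracFilled_mem_Icc ω n k)
      (measurable_fracFilled n k).aestronglyMeasurable 2
  have hcheb := meas_ge_le_variance_div_sq hL2 hε
  rw [hν.integral_fracFilled hp hp1] at hcheb
  refine (ENNReal.toReal_le_of_le_ofReal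
    (div_nonneg (variance_nonneg _ _) (sq_nonneg ε)) hcheb).trans ?_
  calc _ ≤ 1 / 2 ^ k / ε ^ 2 := by
        gcongr
        exact hν.variance_fracFilled_le hp hp1 n k
    _ = 1 / (2 ^ k * ε ^ 2) := by rw [div_div]

-- If both `X̄_k` and `X̄_{k+2}` are within `ε` of their means, the level is `k` or `k + 1`.
lemma _root_.IIDBits.measureReal_fillupLevel_ge (hν : IIDBits p ν) (hp : 0 ≤ p) (hp1 : p ≤ 1)
    {α ε : ℝ} (hε : 0 < ε) (hk : α + ε ≤ wordAvg p k (atLeastTwo n))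
    (hk2 : wordAvg p (k + 2) (atLeastTwo n) ≤ α - ε) :
    1 - 2 / (2 ^ k * ε ^ 2) ≤ ν.real {ω | fillupLevel α ω n = k ∨ fillupLevel α ω n = k + 1} := by
  have := hν.1
  set far := fun j ↦ {ω | ε ≤ |fracFilled ω n j - wordAvg p j (atLeastTwo n)|}
  have hcompl : {ω | fillupLevel α ω n = k ∨ fillupLevel α ω n = k + 1}ᶜ ⊆ far k ∪ far (k + 2) := by
    refine Set.compl_subset_comm.1 fun ω hω ↦ ?_
    simp only [far, Set.compl_union, Set.mem_inter_iff, Set.mem_compl_iff, Set.mem_ofPred_eq,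
      not_le, abs_lt] at hω
    exact fillupLevel_eq_or_eq_succ (by linarith) (by linarith)
  have hfar : ν.real (far k ∪ far (k + 2)) ≤ 2 / (2 ^ k * ε ^ 2) := by
    calc ν.real (far k ∪ far (k + 2)) ≤ 1 / (2 ^ k * ε ^ 2) + 1 / (2 ^ (k + 2) * ε ^ 2) :=
          (measureReal_union_le _ _).trans <| add_le_add
            (hν.measureReal_le_abs_fracFilled_sub hp hp1 n k hε)
            (hν.measureReal_le_abs_fracFilled_sub hp hp1 n (k + 2) hε)
      _ ≤ 1 / (2 ^ k * ε ^ 2) + 1 / (2 ^ k * ε ^ 2) := by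
          gcongr <;> norm_num
      _ = 2 / (2 ^ k * ε ^ 2) := by ring
  have hmono := measureReal_mono hcompl (μ := ν)
  have huniv := measureReal_union_le (μ := ν)
    {ω | fillupLevel α ω n = k ∨ fillupLevel α ω n = k + 1}
    {ω | fillupLevel α ω n = k ∨ fillupLevel α ω n = k + 1}ᶜ
  rw [Set.union_compl_self, probReal_univ] at huniv
  linarith

end RandomStrings

section WordAvg

variable {p : ℝ} {k : ℕ}

lemma wordProb_mem_Icc (hp : 0 ≤ p) (hp1 : p ≤ 1) (r : Fin k → Bool) :
    wordProb p r ∈ Set.Icc 0 1 :=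
  ⟨wordProb_nonneg hp hp1 r, Finset.prod_le_one (fun _ _ ↦ by split_ifs <;> linarith)
    fun _ _ ↦ by split_ifs <;> linarith⟩

lemma wordAvg_sub (f g : ℝ → ℝ) :
    wordAvg p k (fun x ↦ f x - g x) = wordAvg p k f - wordAvg p k g := by
  simp only [wordAvg, Finset.sum_sub_distrib, sub_div]

lemma wordAvg_succ (p : ℝ) (k : ℕ) (f : ℝ → ℝ) :
    wordAvg p (k + 1) f = wordAvg p k fun x ↦ (f (p * x) + f ((1 - p) * x)) / 2 := by
  unfold wordAvg
  rw [← (Fin.consEquiv fun _ ↦ Bool).sum_comp, Fintype.sum_prod_type, Fintype.sum_bool,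
    ← Finset.sum_add_distrib, ← Finset.sum_div, pow_succ', ← div_div]
  simp [wordProb, Fin.prod_univ_succ]

lemma wordAvg_one_sub (p : ℝ) (k : ℕ) (f : ℝ → ℝ) : wordAvg (1 - p) k f = wordAvg p k f := by
  unfold wordAvg
  rw [← ((Equiv.refl (Fin k)).arrowCongr Equiv.boolNot).sum_comp]
  refine congrArg (· / _) (Fintype.sum_congr _ _ fun r ↦ congrArg f ?_)
  refine Fintype.prod_congr _ _ fun j ↦ ?_
  cases h : r j <;> simp [h]

lemma wordProb_eq (p : ℝ) (r : Fin k → Bool) :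
    wordProb p r = p ^ (Finset.univ.filter (r ·)).card *
      (1 - p) ^ (k - (Finset.univ.filter (r ·)).card) := by
  have hcompl : (Finset.univ.filter fun j ↦ ¬ r j).card =
      k - (Finset.univ.filter (r ·)).card := by
    rw [← Finset.compl_filter, Finset.card_compl, Fintype.card_fin]
  rw [wordProb, Finset.prod_ite, Finset.prod_const, Finset.prod_const, hcompl]

lemma wordAvg_eq_sum_choose (p : ℝ) (k : ℕ) (f : ℝ → ℝ) :
    wordAvg p k f =
      (∑ i ∈ Finset.range (k + 1), (k.choose i : ℝ) * f (p ^ i * (1 - p) ^ (k - i))) / 2 ^ k := by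
  have hcard := Finset.sum_powerset_apply_card (x := (Finset.univ : Finset (Fin k)))
    fun i ↦ f (p ^ i * (1 - p) ^ (k - i))
  simp only [Finset.card_univ, Fintype.card_fin, nsmul_eq_mul, Finset.powerset_univ] at hcard
  rw [wordAvg, ← hcard]
  congr 1
  refine Finset.sum_nbij' (fun r ↦ Finset.univ.filter (r ·)) (fun s j ↦ decide (j ∈ s)) ?_ ?_ ?_ ?_
    fun r _ ↦ by rw [wordProb_eq]
  all_goals simp

lemma choose_mul_le_wordAvg (hp : 0 ≤ p) (hp1 : p ≤ 1) {f : ℝ → ℝ}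
    (hf : ∀ x ∈ Set.Icc 0 1, 0 ≤ f x) {i : ℕ} (hi : i ≤ k) :
    (k.choose i : ℝ) / 2 ^ k * f (p ^ i * (1 - p) ^ (k - i)) ≤ wordAvg p k f := by
  have hq : 0 ≤ 1 - p := by linarith
  rw [wordAvg_eq_sum_choose, div_mul_eq_mul_div]
  gcongr
  refine Finset.single_le_sum (f := fun i ↦ (k.choose i : ℝ) * f (p ^ i * (1 - p) ^ (k - i)))
    (fun j _ ↦ mul_nonneg (by positivity) (hf _ ⟨by positivity, ?_⟩))
    (Finset.mem_range_succ_iff.2 hi)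
  exact mul_le_one₀ (pow_le_one₀ hp hp1) (by positivity) (pow_le_one₀ hq (by linarith))

end WordAvg

section AtLeastTwo

variable {n : ℕ} {x y : ℝ}

lemma atLeastTwo_zero (n : ℕ) : atLeastTwo n 0 = 0 := by simp [atLeastTwo]

lemma atLeastTwo_le_one (hx : x ∈ Set.Icc 0 1) : atLeastTwo n x ≤ 1 := by
  have := hx.1
  have : 0 ≤ 1 - x := sub_nonneg.2 hx.2
  exact sub_le_self _ (by positivity)

lemma atLeastTwo_le_mul (hx : x ∈ Set.Icc 0 1) : atLeastTwo n x ≤ n * x := by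
  have := hx.1
  have : 0 ≤ 1 - x := sub_nonneg.2 hx.2
  have hbern := one_add_mul_le_pow (show (-2 : ℝ) ≤ -x by linarith) n
  rw [← sub_eq_add_neg] at hbern
  have : 0 ≤ n * x * (1 - x) ^ (n - 1) := by positivity
  unfold atLeastTwo
  linarith

lemma one_sub_atLeastTwo_le (hn : 2 ≤ n) (hx : x ∈ Set.Ioc 0 1) :
    1 - atLeastTwo n x ≤ 8 / (n * x) := by
  have hx0 := hx.1
  have hq : 0 ≤ 1 - x := sub_nonneg.2 hx.2
  have hn' : (2 : ℝ) ≤ n := by exact_mod_cast hn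
  have hpow : (1 - x) ^ (n - 1) ≤ rexp (-(n * x / 2)) := by
    calc (1 - x) ^ (n - 1) ≤ rexp (-x) ^ (n - 1) := by gcongr; exact one_sub_le_exp_neg x
      _ = rexp (-((n - 1) * x)) := by
          rw [← Real.exp_nat_mul, Nat.cast_pred (by omega)]
          ring_nf
      _ ≤ rexp (-(n * x / 2)) := by gcongr; nlinarith
  have hpow' : (1 - x) ^ n ≤ (1 - x) ^ (n - 1) :=
    pow_le_pow_of_le_one hq (by linarith) (Nat.sub_le n 1)
  have hquad := Real.quadratic_le_exp_of_nonneg (show 0 ≤ n * x / 2 by positivity)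
  calc 1 - atLeastTwo n x ≤ (1 + n * x) * (1 - x) ^ (n - 1) := by unfold atLeastTwo; linarith
    _ ≤ (1 + n * x) * rexp (-(n * x / 2)) := by gcongr
    _ ≤ 8 / (n * x) := by
      rw [Real.exp_neg, ← div_eq_mul_inv, div_le_div_iff₀ (Real.exp_pos _) (by positivity)]
      nlinarith [show 0 < n * x by positivity]

lemma hasDerivAt_atLeastTwo (n : ℕ) (x : ℝ) :
    HasDerivAt (atLeastTwo n) (n * (n - 1) * x * (1 - x) ^ (n - 2)) x := by
  have hsub : HasDerivAt (fun x : ℝ ↦ 1 - x) (-1) x := (hasDerivAt_id x).const_sub 1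
  refine (((hsub.fun_pow n).fun_add
    (((hasDerivAt_id x).const_mul (n : ℝ)).fun_mul (hsub.fun_pow (n - 1)))).const_sub 1).congr_deriv
    ?_
  rcases n with - | - | n
  · simp
  · simp
  · simp only [id, show n + 1 + 1 - 1 = n + 1 from rfl, show n + 1 + 1 - 2 = n from rfl,
      Nat.add_sub_cancel]
    push_cast
    ring

lemma mul_sub_le_atLeastTwo_sub (hn : n ≠ 0) (hy : 0 ≤ y) (hxy : y ≤ x) (hx : x ≤ 1) :
    n * (n - 1) * y * (1 - x) ^ (n - 2) * (x - y) ≤ atLeastTwo n x - atLeastTwo n y := by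
  refine Convex.mul_sub_le_image_sub_of_le_deriv (convex_Icc y x)
    (fun z _ ↦ (hasDerivAt_atLeastTwo n z).continuousAt.continuousWithinAt)
    (fun z _ ↦ (hasDerivAt_atLeastTwo n z).differentiableAt.differentiableWithinAt) (fun z hz ↦ ?_)
    y (Set.left_mem_Icc.2 hxy) x (Set.right_mem_Icc.2 hxy) hxy
  obtain ⟨hyz, hzx⟩ := interior_Icc (a := y) (b := x) ▸ hz
  have hn1 : (0 : ℝ) ≤ n - 1 := sub_nonneg.2 (by exact_mod_cast Nat.one_le_iff_ne_zero.2 hn)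
  have : 0 ≤ 1 - x := sub_nonneg.2 hx
  rw [(hasDerivAt_atLeastTwo n z).deriv]
  have : 0 ≤ z := hy.trans hyz.le
  gcongr

lemma atLeastTwo_mono (hn : n ≠ 0) (hy : 0 ≤ y) (hxy : y ≤ x) (hx : x ≤ 1) :
    atLeastTwo n y ≤ atLeastTwo n x := by
  have hn1 : (0 : ℝ) ≤ n - 1 := sub_nonneg.2 (by exact_mod_cast Nat.one_le_iff_ne_zero.2 hn)
  have : 0 ≤ 1 - x := sub_nonneg.2 hx
  have : 0 ≤ x - y := sub_nonneg.2 hxy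
  refine sub_nonneg.1 (le_trans (by positivity) (mul_sub_le_atLeastTwo_sub hn hy hxy hx))

lemma atLeastTwo_nonneg (hn : n ≠ 0) (hx : x ∈ Set.Icc 0 1) : 0 ≤ atLeastTwo n x :=
  atLeastTwo_zero n ▸ atLeastTwo_mono hn le_rfl hx.1 hx.2

lemma exp_neg_two_mul_le_one_sub_pow (hx : 0 ≤ x) (hx2 : x ≤ 1 / 2) (n : ℕ) :
    rexp (-2 * (n * x)) ≤ (1 - x) ^ n := by
  have hexp : rexp (-2 * x) ≤ 1 - x := by
    rw [neg_mul, Real.exp_neg, inv_le_comm₀ (Real.exp_pos _) (by linarith),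
      inv_le_iff_one_le_mul₀ (by linarith)]
    nlinarith [Real.add_one_le_exp (2 * x)]
  calc rexp (-2 * (n * x)) = rexp (-2 * x) ^ n := by rw [← Real.exp_nat_mul]; ring_nf
    _ ≤ (1 - x) ^ n := by gcongr

end AtLeastTwo

section LevelDrop

variable {p x : ℝ} {n k : ℕ}

/-- The contribution of a word of probability `x` to the decrease of the expected proportion of
filled words when each word is replaced by its two extensions by one letter. -/
noncomputable def levelDrop (p : ℝ) (n : ℕ) (x : ℝ) : ℝ :=
  atLeastTwo n x - (atLeastTwo n (p * x) + atLeastTwo n ((1 - p) * x)) / 2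

lemma wordAvg_levelDrop (p : ℝ) (n k : ℕ) :
    wordAvg p k (levelDrop p n) =
      wordAvg p k (atLeastTwo n) - wordAvg p (k + 1) (atLeastTwo n) := by
  rw [wordAvg_succ, ← wordAvg_sub]
  rfl

lemma half_atLeastTwo_sub_le_levelDrop (hn : n ≠ 0) (hp : 0 ≤ p) (hp1 : p ≤ 1)
    (hx : x ∈ Set.Icc 0 1) :
    (atLeastTwo n x - atLeastTwo n ((1 - p) * x)) / 2 ≤ levelDrop p n x := by
  have := atLeastTwo_mono hn (mul_nonneg hp hx.1) (mul_le_of_le_one_left hx.1 hp1) hx.2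
  unfold levelDrop
  linarith

lemma levelDrop_nonneg (hn : n ≠ 0) (hp : 0 ≤ p) (hp1 : p ≤ 1) (hx : x ∈ Set.Icc 0 1) :
    0 ≤ levelDrop p n x := by
  have := half_atLeastTwo_sub_le_levelDrop hn hp hp1 hx
  have := atLeastTwo_mono hn (mul_nonneg (sub_nonneg.2 hp1) hx.1)
    (mul_le_of_le_one_left hx.1 (by linarith)) hx.2
  linarith

lemma levelDrop_lower_bound (hp : 0 ≤ p) (hp1 : p ≤ 1) {a b : ℝ} (ha : 0 < a) (han : a ≤ n * x)
    (hbn : n * x ≤ b) (hb : 2 * b ≤ n) (hn : 2 ≤ n) :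
    p * (1 - p) * a ^ 2 * rexp (-2 * b) / 4 ≤ levelDrop p n x := by
  have hn' : (2 : ℝ) ≤ n := by exact_mod_cast hn
  have hx0 : 0 < x := pos_of_mul_pos_right (ha.trans_le han) (by positivity)
  have hx2 : x ≤ 1 / 2 := le_of_mul_le_mul_left (a := (n : ℝ)) (by linarith) (by linarith)
  have : 0 ≤ 1 - p := sub_nonneg.2 hp1
  have hpow : rexp (-2 * b) ≤ (1 - x) ^ (n - 2) :=
    calc rexp (-2 * b) ≤ rexp (-2 * (n * x)) := Real.exp_le_exp.2 (by linarith)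
      _ ≤ (1 - x) ^ n := exp_neg_two_mul_le_one_sub_pow hx0.le hx2 n
      _ ≤ (1 - x) ^ (n - 2) :=
        pow_le_pow_of_le_one (by linarith) (by linarith) (Nat.sub_le n 2)
  have hsq : a ^ 2 / 2 ≤ n * (n - 1) * x ^ 2 := by
    have : a ^ 2 ≤ (n * x) ^ 2 := by gcongr
    nlinarith [mul_nonneg (mul_nonneg (by positivity : (0 : ℝ) ≤ n) (sub_nonneg.2 hn'))
      (sq_nonneg x)]
  have hmvt := mul_sub_le_atLeastTwo_sub (n := n) (y := (1 - p) * x) (x := x) (by omega)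
    (by positivity) (mul_le_of_le_one_left hx0.le (by linarith)) (by linarith)
  refine le_trans ?_ (half_atLeastTwo_sub_le_levelDrop (by omega) hp hp1 ⟨hx0.le, by linarith⟩)
  calc p * (1 - p) * a ^ 2 * rexp (-2 * b) / 4
      = p * (1 - p) * (a ^ 2 / 2 * rexp (-2 * b)) / 2 := by ring
    _ ≤ p * (1 - p) * (n * (n - 1) * x ^ 2 * (1 - x) ^ (n - 2)) / 2 := by
        have : 0 ≤ (n : ℝ) * (n - 1) * x ^ 2 := le_trans (by positivity) hsq
        gcongr
    _ = n * (n - 1) * ((1 - p) * x) * (1 - x) ^ (n - 2) * (x - (1 - p) * x) / 2 := by ring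
    _ ≤ _ := by gcongr

lemma antitone_wordAvg_atLeastTwo (hn : n ≠ 0) (hp : 0 ≤ p) (hp1 : p ≤ 1) :
    Antitone fun k ↦ wordAvg p k (atLeastTwo n) := by
  refine antitone_nat_of_succ_le fun k ↦ sub_nonneg.1 ?_
  rw [← wordAvg_levelDrop]
  exact div_nonneg (Finset.sum_nonneg fun r _ ↦
    levelDrop_nonneg hn hp hp1 (wordProb_mem_Icc hp hp1 r)) (by positivity)

end LevelDrop

local notation "Φ" => cdf (gaussianReal 0 1)
local notation "φ" => gaussianPDFReal 0 1

section Normal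

lemma stdGaussianPDF_eq (x : ℝ) : φ x = (√(2 * π))⁻¹ * rexp (-(x ^ 2 / 2)) := by
  simp [gaussianPDFReal, neg_div]

lemma stdGaussianPDF_pos (x : ℝ) : 0 < φ x := gaussianPDFReal_pos 0 1 x one_ne_zero

lemma hasDerivAt_stdGaussianPDF (x : ℝ) : HasDerivAt φ (-x * φ x) x := by
  have := ((((hasDerivAt_id x).fun_pow 2).div_const 2).fun_neg.exp).const_mul (√(2 * π))⁻¹
  refine HasDerivAt.congr_deriv (this.congr_of_eventuallyEq (.of_forall stdGaussianPDF_eq)) ?_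
  rw [stdGaussianPDF_eq]
  simp only [id]
  push_cast
  ring

lemma continuous_stdGaussianPDF : Continuous φ :=
  continuous_iff_continuousAt.2 fun x ↦ (hasDerivAt_stdGaussianPDF x).continuousAt

lemma inv_sqrt_two_pi_le_one : (√(2 * π))⁻¹ ≤ 1 :=
  inv_le_one_of_one_le₀ (Real.one_le_sqrt.2 (by linarith [Real.pi_gt_three]))

lemma stdGaussianPDF_le_one (x : ℝ) : φ x ≤ 1 := by
  rw [stdGaussianPDF_eq]
  exact mul_le_one₀ inv_sqrt_two_pi_le_one (Real.exp_pos _).le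
    (Real.exp_le_one_iff.2 (by linarith [sq_nonneg x]))

lemma abs_mul_stdGaussianPDF_le_one (x : ℝ) : |x * φ x| ≤ 1 := by
  have hexp : |x| * rexp (-(x ^ 2 / 2)) ≤ 1 := by
    rw [Real.exp_neg, ← div_eq_mul_inv, div_le_one (Real.exp_pos _), ← sq_abs]
    nlinarith [Real.add_one_le_exp (|x| ^ 2 / 2), sq_nonneg (|x| - 1)]
  rw [abs_mul, abs_of_pos (stdGaussianPDF_pos x), stdGaussianPDF_eq, mul_left_comm]
  exact mul_le_one₀ inv_sqrt_two_pi_le_one (by positivity) hexp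

lemma abs_stdGaussianPDF_sub_le (x y : ℝ) : |φ x - φ y| ≤ |x - y| := by
  simpa using convex_univ.norm_image_sub_le_of_norm_hasDerivWithin_le (C := 1)
    (fun z _ ↦ (hasDerivAt_stdGaussianPDF z).hasDerivWithinAt)
    (fun z _ ↦ by simpa using abs_mul_stdGaussianPDF_le_one z) (Set.mem_univ y) (Set.mem_univ x)

lemma cdf_stdGaussian_sub {x y : ℝ} (h : x ≤ y) : Φ y - Φ x = ∫ t in x..y, φ t := by
  rw [cdf_eq_real, cdf_eq_real, ← measureReal_sdiff (Set.Iic_subset_Iic.2 h) measurableSet_Iic,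
    intervalIntegral.integral_of_le h, Set.Iic_sdiff_Iic, Measure.real,
    gaussianReal_apply_eq_integral 0 one_ne_zero, ENNReal.toReal_ofReal]
  exact setIntegral_nonneg measurableSet_Ioc fun t _ ↦ (stdGaussianPDF_pos t).le

lemma hasDerivAt_cdf_stdGaussian (x : ℝ) : HasDerivAt Φ (φ x) x := by
  have hint : HasDerivAt (fun y ↦ ∫ t in (x - 1)..y, φ t) (φ x) x :=
    intervalIntegral.integral_hasDerivAt_right (continuous_stdGaussianPDF.intervalIntegrable _ _)
      (continuous_stdGaussianPDF.stronglyMeasurableAtFilter _ _)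
      continuous_stdGaussianPDF.continuousAt
  refine (hint.const_add (Φ (x - 1))).congr_of_eventuallyEq ?_
  filter_upwards [lt_mem_nhds (show x - 1 < x by linarith)] with y hy
  rw [← cdf_stdGaussian_sub hy.le, add_sub_cancel]

lemma abs_cdf_stdGaussian_sub_le (x y : ℝ) : |Φ x - Φ y| ≤ |x - y| := by
  simpa using convex_univ.norm_image_sub_le_of_norm_hasDerivWithin_le (C := 1)
    (fun z _ ↦ (hasDerivAt_cdf_stdGaussian z).hasDerivWithinAt)
    (fun z _ ↦ by simpa [abs_of_pos (stdGaussianPDF_pos z)] using stdGaussianPDF_le_one z)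
    (Set.mem_univ y) (Set.mem_univ x)

lemma cdf_stdGaussian_neg (x : ℝ) : Φ (-x) = 1 - Φ x := by
  have : NullSingletonClass (gaussianReal 0 1) := nullSingletonClass_gaussianReal one_ne_zero
  have hneg : (gaussianReal 0 1).map (fun x ↦ -x) = gaussianReal 0 1 := by
    simp [gaussianReal_map_neg]
  have hpre : (fun y : ℝ ↦ -y) ⁻¹' Set.Iic (-x) = Set.Ici x := by ext; simp
  rw [cdf_eq_real, cdf_eq_real, ← probReal_compl_eq_one_sub measurableSet_Iic, Set.compl_Iic,
    measureReal_congr Ioi_ae_eq_Ici, ← hpre,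
    ← map_measureReal_apply measurable_neg measurableSet_Iic, hneg]

lemma cdf_stdGaussian_zero : Φ 0 = 1 / 2 := by
  have := cdf_stdGaussian_neg 0
  rw [neg_zero] at this
  linarith

lemma abs_mul_stdGaussianPDF_sub_cdf_sub_le {x h : ℝ} (hh : 0 ≤ h) :
    |h * φ (x + h) - (Φ (x + h) - Φ x)| ≤ h ^ 2 := by
  have hmvt := (convex_Icc x (x + h)).norm_image_sub_le_of_norm_hasDerivWithin_le
    (f := fun z ↦ Φ z - z * φ (x + h)) (f' := fun z ↦ φ z - 1 * φ (x + h)) (C := h)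
    (fun z _ ↦ ((hasDerivAt_cdf_stdGaussian z).fun_sub
      ((hasDerivAt_id z).mul_const _)).hasDerivWithinAt)
    (fun z hz ↦ by
      rw [one_mul]
      refine (abs_stdGaussianPDF_sub_le z (x + h)).trans (abs_le.2 ⟨?_, ?_⟩) <;>
        linarith [hz.1, hz.2])
    (Set.left_mem_Icc.2 (by linarith)) (Set.right_mem_Icc.2 (by linarith))
  rw [add_sub_cancel_left, Real.norm_of_nonneg hh, ← sq, norm_sub_rev] at hmvt
  convert hmvt using 2
  rw [Real.norm_eq_abs]
  ring_nf

lemma mul_abs_sub_le_abs_cdf_stdGaussian_sub {x y Y : ℝ} (hx : |x| ≤ Y) (hy : |y| ≤ Y) :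
    φ Y * |x - y| ≤ |Φ x - Φ y| := by
  wlog hyx : y ≤ x generalizing x y
  · rw [abs_sub_comm x, abs_sub_comm (Φ x)]
    exact this hy hx (le_of_not_ge hyx)
  have hmvt := (convex_Icc (-Y) Y).mul_sub_le_image_sub_of_le_deriv
    (fun z _ ↦ (hasDerivAt_cdf_stdGaussian z).continuousAt.continuousWithinAt)
    (fun z _ ↦ (hasDerivAt_cdf_stdGaussian z).differentiableAt.differentiableWithinAt)
    (C := φ Y) (fun z hz ↦ ?_) y (abs_le.1 hy) x (abs_le.1 hx) hyx
  · rw [abs_of_nonneg (sub_nonneg.2 hyx)]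
    exact hmvt.trans (le_abs_self _)
  · have : z ^ 2 ≤ Y ^ 2 := sq_le_sq' (interior_subset hz).1 (interior_subset hz).2
    rw [(hasDerivAt_cdf_stdGaussian z).deriv, stdGaussianPDF_eq, stdGaussianPDF_eq]
    gcongr

end Normal

section CentralBinomial

/-- The probability that a binomial variable with parameters `2 * m` and `1 / 2` equals `m + j`. -/
noncomputable def binomMass (m j : ℕ) : ℝ := (2 * m).choose (m + j) / 4 ^ m

variable {m j J : ℕ}

lemma binomMass_pos (h : j ≤ m) : 0 < binomMass m j :=
  div_pos (Nat.cast_pos.2 (Nat.choose_pos (by omega))) (by positivity)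

lemma binomMass_eq_choose_sub (h : j ≤ m) : binomMass m j = (2 * m).choose (m - j) / 4 ^ m := by
  rw [binomMass, ← Nat.choose_symm_of_eq_add (show 2 * m = (m + j) + (m - j) by omega)]

lemma binomMass_succ (h : j ≤ m) :
    binomMass m (j + 1) = binomMass m j * ((m - j) / (m + j + 1)) := by
  have hchoose := Nat.choose_succ_right_eq (2 * m) (m + j)
  rw [show 2 * m - (m + j) = m - j by omega] at hchoose
  have : ((2 * m).choose (m + j + 1) : ℝ) * (m + j + 1) = (2 * m).choose (m + j) * (m - j) := by
    rw [← Nat.cast_sub h]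
    exact_mod_cast hchoose
  rw [binomMass, binomMass, ← add_assoc, div_mul_div_comm, div_eq_div_iff (by positivity)
    (by positivity)]
  linear_combination 4 ^ m * this

lemma binomMass_le_exp (hJ : J ≤ m) (hj : j ≤ J) :
    binomMass m j ≤ binomMass m 0 * rexp (-(j ^ 2 / (m + J))) := by
  induction j with
  | zero => simp
  | succ j ih =>
    have hjJ : (j : ℝ) + 1 ≤ J := by exact_mod_cast hj
    have hjm : (0 : ℝ) < m - j := sub_pos.2 (by exact_mod_cast (by omega : j < m))
    have hratio : ((m - j) / (m + j + 1) : ℝ) ≤ rexp (-((2 * j + 1) / (m + J))) := by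
      calc ((m - j) / (m + j + 1) : ℝ) = 1 - (2 * j + 1) / (m + j + 1) := by field_simp; ring
        _ ≤ 1 - (2 * j + 1) / (m + J) := by gcongr 1 - _ / ?_; linarith
        _ ≤ _ := one_sub_le_exp_neg _
    rw [binomMass_succ (by omega)]
    calc binomMass m j * ((m - j) / (m + j + 1))
        ≤ binomMass m 0 * rexp (-(j ^ 2 / (m + J))) * rexp (-((2 * j + 1) / (m + J))) := by
          have := (binomMass_pos (Nat.zero_le m)).le
          gcongr
          exact ih (by omega)
      _ = binomMass m 0 * rexp (-((j + 1 : ℕ) ^ 2 / (m + J))) := by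
          rw [mul_assoc, ← Real.exp_add]
          push_cast
          ring_nf

lemma exp_le_binomMass (hJ : J < m) (hj : j ≤ J) :
    binomMass m 0 * rexp (-(j ^ 2 / (m - J))) ≤ binomMass m j := by
  induction j with
  | zero => simp
  | succ j ih =>
    have hjJ : (j : ℝ) + 1 ≤ J := by exact_mod_cast hj
    have hJm : (0 : ℝ) < m - J := sub_pos.2 (by exact_mod_cast hJ)
    have hjm : (0 : ℝ) < m - j := by linarith
    have hratio : rexp (-((2 * j + 1) / (m - J))) ≤ ((m - j) / (m + j + 1) : ℝ) := by
      rw [Real.exp_neg, inv_le_comm₀ (Real.exp_pos _) (by positivity), inv_div]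
      calc ((m + j + 1) / (m - j) : ℝ) = (2 * j + 1) / (m - j) + 1 := by field_simp; ring
        _ ≤ (2 * j + 1) / (m - J) + 1 := by gcongr; linarith
        _ ≤ _ := Real.add_one_le_exp _
    rw [binomMass_succ (by omega)]
    calc binomMass m 0 * rexp (-((j + 1 : ℕ) ^ 2 / (m - J)))
        = binomMass m 0 * rexp (-(j ^ 2 / (m - J))) * rexp (-((2 * j + 1) / (m - J))) := by
          rw [mul_assoc, ← Real.exp_add]
          push_cast
          ring_nf
      _ ≤ binomMass m j * ((m - j) / (m + j + 1)) := by
          have := (binomMass_pos (show j ≤ m by omega)).le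
          gcongr
          exact ih (by omega)

lemma binomMass_zero_sq_mul_wallis (m : ℕ) :
    binomMass m 0 ^ 2 * (2 * m + 1) * Real.Wallis.W m = 1 := by
  have hchoose : ((2 * m).choose m : ℝ) = (2 * m).factorial / m.factorial ^ 2 := by
    rw [Nat.cast_choose ℝ (show m ≤ 2 * m by omega), show 2 * m - m = m by omega, sq]
  have hpow : (2 : ℝ) ^ (4 * m) = (4 ^ m) ^ 2 := by
    rw [← pow_mul, mul_comm m 2, pow_mul, pow_mul]
    norm_num
  rw [Real.Wallis.W_eq_factorial_ratio, binomMass, add_zero, hchoose, hpow]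
  have := m.factorial_ne_zero
  have := (2 * m).factorial_ne_zero
  field_simp

lemma binomMass_zero_mul_sqrt_mem_Icc (hm : m ≠ 0) :
    binomMass m 0 * √(π * m) ∈ Set.Icc (1 - 1 / (2 * m + 1) : ℝ) 1 := by
  have : (1 : ℝ) ≤ m := by exact_mod_cast Nat.one_le_iff_ne_zero.2 hm
  have hwallis := binomMass_zero_sq_mul_wallis m
  have hB := binomMass_pos (Nat.zero_le m)
  set b := binomMass m 0
  have hz : 0 ≤ b * √(π * m) := by positivity
  have hz2 : (b * √(π * m)) ^ 2 = b ^ 2 * (π * m) := by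
    rw [mul_pow, Real.sq_sqrt (by positivity)]
  have hlower : 2 ≤ b ^ 2 * (2 * m + 1) * π := by
    have : b ^ 2 * (2 * m + 1) * Real.Wallis.W m ≤ b ^ 2 * (2 * m + 1) * (π / 2) := by
      gcongr
      exact Real.Wallis.W_le m
    linarith
  have hupper : b ^ 2 * (2 * m + 1) ^ 2 * π ≤ 4 * (m + 1) := by
    have hW : (2 * m + 1 : ℝ) * π ≤ Real.Wallis.W m * (4 * (m + 1)) := by
      have := Real.Wallis.le_W m
      rw [div_mul_div_comm, div_le_iff₀ (by positivity)] at this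
      linarith
    calc b ^ 2 * (2 * m + 1) ^ 2 * π = b ^ 2 * (2 * m + 1) * ((2 * m + 1) * π) := by ring
      _ ≤ b ^ 2 * (2 * m + 1) * (Real.Wallis.W m * (4 * (m + 1))) := by gcongr
      _ = 4 * (m + 1) := by rw [← mul_assoc, hwallis, one_mul]
  have hle : b * √(π * m) ≤ 1 := by
    refine (sq_le_one_iff₀ hz).1 (hz2 ▸ le_of_mul_le_mul_right (a := (2 * m + 1 : ℝ) ^ 2) ?_
      (by positivity))
    nlinarith [mul_le_mul_of_nonneg_right hupper (show (0 : ℝ) ≤ m by positivity)]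
  refine ⟨?_, hle⟩
  have hsq : 1 - 1 / (2 * m + 1 : ℝ) ≤ (b * √(π * m)) ^ 2 := by
    rw [hz2, sub_le_iff_le_add, ← sub_le_iff_le_add', le_div_iff₀ (by positivity)]
    nlinarith
  exact hsq.trans (pow_le_of_le_one hz hle two_ne_zero)

lemma abs_binomMass_zero_sub_le (hm : m ≠ 0) : |binomMass m 0 - 1 / √(π * m)| ≤ 1 / m := by
  have hm' : (1 : ℝ) ≤ m := by exact_mod_cast Nat.one_le_iff_ne_zero.2 hm
  have hs : 1 ≤ √(π * m) := Real.one_le_sqrt.2 (by nlinarith [Real.pi_gt_three])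
  obtain ⟨hlower, hupper⟩ := binomMass_zero_mul_sqrt_mem_Icc hm
  have : 1 / (2 * m + 1 : ℝ) ≤ 1 / m := by gcongr; linarith
  calc |binomMass m 0 - 1 / √(π * m)| = |binomMass m 0 * √(π * m) - 1| / √(π * m) := by
        rw [← abs_of_pos (zero_lt_one.trans_le hs), ← abs_div, abs_of_pos (zero_lt_one.trans_le hs)]
        field_simp
    _ ≤ |binomMass m 0 * √(π * m) - 1| := div_le_self (abs_nonneg _) hs
    _ ≤ 1 / m := abs_le.2 ⟨by linarith, by linarith [show (0 : ℝ) < 1 / m by positivity]⟩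

lemma binomMass_zero_le (hm : m ≠ 0) : binomMass m 0 ≤ 1 / √m := by
  rw [le_div_iff₀ (by positivity)]
  have := (binomMass_pos (Nat.zero_le m)).le
  refine le_trans ?_ (binomMass_zero_mul_sqrt_mem_Icc hm).2
  gcongr
  nlinarith [Real.pi_gt_three]

lemma le_binomMass_zero (hm : m ≠ 0) : 1 / (4 * √m) ≤ binomMass m 0 := by
  have hm' : (1 : ℝ) ≤ m := by exact_mod_cast Nat.one_le_iff_ne_zero.2 hm
  have hsqrt : √(π * m) ≤ 2 * √m := by
    rw [Real.sqrt_mul Real.pi_nonneg]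
    gcongr
    exact (Real.sqrt_le_left two_pos.le).2 (by linarith [Real.pi_le_four])
  have hB := (binomMass_pos (Nat.zero_le m)).le
  have : 1 / (2 * m + 1 : ℝ) ≤ 1 / 3 := by gcongr; linarith
  have := (binomMass_zero_mul_sqrt_mem_Icc hm).1
  rw [div_le_iff₀ (by positivity)]
  nlinarith [mul_le_mul_of_nonneg_left hsqrt hB]

lemma choose_div_four_pow_le (hm : m ≠ 0) (s : ℕ) : ((2 * m).choose s : ℝ) / 4 ^ m ≤ 1 / √m := by
  refine le_trans ?_ (binomMass_zero_le hm)
  rw [binomMass, add_zero]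
  gcongr
  exact Nat.choose_le_centralBinom s m

lemma abs_exp_neg_sub_exp_neg_le {a b : ℝ} (ha : 0 ≤ a) (hb : 0 ≤ b) :
    |rexp (-a) - rexp (-b)| ≤ |a - b| := by
  simpa using (convex_Ici (0 : ℝ)).norm_image_sub_le_of_norm_hasDerivWithin_le (C := 1)
    (f := fun x ↦ rexp (-x)) (fun z _ ↦ ((hasDerivAt_id z).fun_neg.exp).hasDerivWithinAt)
    (fun z hz ↦ by simpa using hz) (Set.mem_Ici.2 hb) (Set.mem_Ici.2 ha)

lemma abs_binomMass_sub_exp_le (hj : 2 * j ≤ m) (hm : m ≠ 0) :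
    |binomMass m j - binomMass m 0 * rexp (-(j ^ 2 / m))| ≤
      binomMass m 0 * (2 * j ^ 3 / m ^ 2) := by
  have hm' : (0 : ℝ) < m := by positivity
  have hj' : 2 * (j : ℝ) ≤ m := by exact_mod_cast hj
  have hj0 : (0 : ℝ) ≤ j := by positivity
  have hmj : (0 : ℝ) < m - j := by linarith
  have hB := (binomMass_pos (Nat.zero_le m)).le
  have hupper := abs_exp_neg_sub_exp_neg_le (a := j ^ 2 / (m + j)) (b := j ^ 2 / m)
    (by positivity) (by positivity)
  have hlower := abs_exp_neg_sub_exp_neg_le (a := j ^ 2 / m) (b := j ^ 2 / (m - j))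
    (by positivity) (by positivity)
  have hdiff_upper : |(j : ℝ) ^ 2 / (m + j) - j ^ 2 / m| ≤ 2 * j ^ 3 / m ^ 2 := by
    rw [abs_sub_comm, show (j : ℝ) ^ 2 / m - j ^ 2 / (m + j) = j ^ 3 / (m * (m + j)) by
      field_simp; ring, abs_of_nonneg (by positivity), div_le_div_iff₀ (by positivity)
      (by positivity)]
    nlinarith [pow_nonneg hj0 3, mul_nonneg (pow_nonneg hj0 3) (sq_nonneg (m : ℝ)),
      mul_nonneg (mul_nonneg (pow_nonneg hj0 3) hj0) hm'.le]
  have hdiff_lower : |(j : ℝ) ^ 2 / m - j ^ 2 / (m - j)| ≤ 2 * j ^ 3 / m ^ 2 := by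
    rw [abs_sub_comm, show (j : ℝ) ^ 2 / (m - j) - j ^ 2 / m = j ^ 3 / (m * (m - j)) by
      field_simp; ring, abs_of_nonneg (by positivity), div_le_div_iff₀ (by positivity)
      (by positivity)]
    nlinarith [mul_nonneg (mul_nonneg (pow_nonneg hj0 3) hm'.le) (sub_nonneg.2 hj')]
  have hle := binomMass_le_exp (show j ≤ m by omega) le_rfl
  have hge := exp_le_binomMass (show j < m by omega) le_rfl
  rw [abs_le]
  constructor
  · nlinarith [le_abs_self (rexp (-(j ^ 2 / m)) - rexp (-(j ^ 2 / (m - j)) : ℝ))]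
  · nlinarith [le_abs_self (rexp (-(j ^ 2 / (m + j)) : ℝ) - rexp (-(j ^ 2 / m)))]

lemma sqrt_mul_stdGaussianPDF {a : ℝ} (ha : 0 < a) (y : ℝ) :
    √(2 / a) * φ (y * √(2 / a)) = 1 / √(π * a) * rexp (-(y ^ 2 / a)) := by
  have := Real.pi_pos
  rw [stdGaussianPDF_eq, ← mul_assoc, mul_pow, Real.sq_sqrt (by positivity), ← Real.sqrt_inv,
    ← Real.sqrt_mul (by positivity), one_div, ← Real.sqrt_inv]
  congr 2 <;> field_simp

lemma abs_binomMass_sub_stdGaussianPDF_le {Y : ℝ} (hm : m ≠ 0) (hjY : j ≤ Y * √m)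
    (hj : 2 * j ≤ m) :
    |binomMass m j - √(2 / m) * φ (j * √(2 / m))| ≤ (2 * Y ^ 3 + 1) / m := by
  have hm' : (0 : ℝ) < m := by positivity
  have hexp : rexp (-(j ^ 2 / m)) ≤ 1 := Real.exp_le_one_iff.2 (neg_nonpos.2 (by positivity))
  have hshape : binomMass m 0 * (2 * j ^ 3 / m ^ 2) ≤ 2 * Y ^ 3 / m :=
    calc binomMass m 0 * (2 * j ^ 3 / m ^ 2) ≤ 1 / √m * (2 * (Y * √m) ^ 3 / m ^ 2) := by
          gcongr
          exact binomMass_zero_le hm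
      _ = 2 * Y ^ 3 / m := by
          field_simp
          rw [Real.sq_sqrt hm'.le, mul_comm]
  rw [sqrt_mul_stdGaussianPDF hm']
  calc |binomMass m j - 1 / √(π * m) * rexp (-(j ^ 2 / m))|
      = |(binomMass m j - binomMass m 0 * rexp (-(j ^ 2 / m))) +
          (binomMass m 0 - 1 / √(π * m)) * rexp (-(j ^ 2 / m))| := by ring_nf
    _ ≤ 2 * Y ^ 3 / m + 1 / m * 1 := by
        refine (abs_add_le _ _).trans
          (add_le_add ((abs_binomMass_sub_exp_le hj hm).trans hshape) ?_)
        rw [abs_mul, abs_of_pos (Real.exp_pos _)]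
        gcongr
        exact abs_binomMass_zero_sub_le hm
    _ = (2 * Y ^ 3 + 1) / m := by ring

lemma exp_div_sqrt_le_binomMass {Y : ℝ} (hm : m ≠ 0) (hjY : j ≤ Y * √m) (hj : 2 * j ≤ m) :
    rexp (-(2 * Y ^ 2)) / 4 / √m ≤ binomMass m j := by
  have hm' : (0 : ℝ) < m := by positivity
  have hj' : 2 * (j : ℝ) ≤ m := by exact_mod_cast hj
  have hsq : (j : ℝ) ^ 2 ≤ Y ^ 2 * m := by
    calc (j : ℝ) ^ 2 ≤ (Y * √m) ^ 2 := by gcongr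
      _ = Y ^ 2 * m := by rw [mul_pow, Real.sq_sqrt hm'.le]
  have hexponent : (j : ℝ) ^ 2 / (m - j) ≤ 2 * Y ^ 2 := by
    rw [div_le_iff₀ (by linarith)]
    nlinarith [sq_nonneg Y]
  calc rexp (-(2 * Y ^ 2)) / 4 / √m = 1 / (4 * √m) * rexp (-(2 * Y ^ 2)) := by field_simp
    _ ≤ binomMass m 0 * rexp (-(j ^ 2 / (m - j))) := by
        have := (binomMass_pos (Nat.zero_le m)).le
        gcongr
        exact le_binomMass_zero hm
    _ ≤ binomMass m j := exp_le_binomMass (by omega) le_rfl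

end CentralBinomial

section BinomialTail

/-- The probability that a binomial variable with parameters `2 * m` and `1 / 2` is at least `i`.
The threshold is an integer because it is compared with real shifts that may be negative. -/
noncomputable def binomTail (m : ℕ) (i : ℤ) : ℝ :=
  (∑ s ∈ (Finset.range (2 * m + 1)).filter fun s : ℕ ↦ i ≤ s, ((2 * m).choose s : ℝ)) / 4 ^ m

variable {m J : ℕ}

lemma binomTail_eq_add {t : ℕ} (ht : t ≤ 2 * m) :
    binomTail m t = (2 * m).choose t / 4 ^ m + binomTail m (t + 1) := by
  have hinsert : (Finset.range (2 * m + 1)).filter (fun s : ℕ ↦ (t : ℤ) ≤ s) =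
      insert t ((Finset.range (2 * m + 1)).filter fun s : ℕ ↦ (t : ℤ) + 1 ≤ s) := by
    ext s
    simp only [Finset.mem_filter, Finset.mem_range, Finset.mem_insert]
    omega
  rw [binomTail, binomTail, hinsert, Finset.sum_insert (by simp), add_div]

lemma binomTail_add_binomTail_reflect (m : ℕ) (i : ℤ) :
    binomTail m (m + i) + binomTail m (m + 1 - i) = 1 := by
  have hreflect :
      ∑ s ∈ (Finset.range (2 * m + 1)).filter fun s : ℕ ↦ m + 1 - i ≤ s, ((2 * m).choose s : ℝ) =
      ∑ s ∈ (Finset.range (2 * m + 1)).filter fun s : ℕ ↦ ¬ m + i ≤ s, ((2 * m).choose s : ℝ) := by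
    refine Finset.sum_nbij' (2 * m - ·) (2 * m - ·) ?_ ?_ ?_ ?_ fun s hs ↦ ?_
    iterate 4
      · intro s hs
        simp only [Finset.mem_filter, Finset.mem_range] at hs ⊢
        omega
    · rw [Nat.choose_symm (by grind)]
  rw [binomTail, binomTail, hreflect, ← add_div, Finset.sum_filter_add_sum_filter_not,
    div_eq_one_iff_eq (by positivity), show (4 : ℝ) ^ m = 2 ^ (2 * m) by rw [pow_mul]; norm_num]
  exact_mod_cast Nat.sum_range_choose (2 * m)

lemma binomTail_self (m : ℕ) : binomTail m m = 1 / 2 + binomMass m 0 / 2 := by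
  have hadd := binomTail_eq_add (show m ≤ 2 * m by omega)
  have hreflect := binomTail_add_binomTail_reflect m 0
  rw [add_zero, sub_zero] at hreflect
  rw [binomMass, add_zero]
  linarith

lemma binomTail_sub_succ (hJ : J + 1 ≤ m) :
    binomTail m (m - (J + 1 : ℕ)) = binomMass m (J + 1) + binomTail m (m - J) := by
  rw [binomMass_eq_choose_sub hJ, ← Nat.cast_sub hJ, binomTail_eq_add (by omega), Nat.cast_sub hJ]
  congr 2
  push_cast
  ring

lemma abs_binomTail_sub_nat_sub_cdf_le {Y : ℝ} (hm : m ≠ 0) (hJY : J ≤ Y * √m) (hJ : 2 * J ≤ m) :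
    |binomTail m (m - J) - Φ (J * √(2 / m))| ≤ 1 / √m + J * ((2 * Y ^ 3 + 3) / m) := by
  induction J with
  | zero =>
    have hB := binomMass_zero_le hm
    have := binomMass_pos (Nat.zero_le m)
    simp only [Nat.cast_zero, zero_mul, sub_zero, cdf_stdGaussian_zero, add_zero, binomTail_self]
    rw [add_sub_cancel_left, abs_of_pos (by positivity)]
    linarith
  | succ J ih =>
    have hlocal := abs_binomMass_sub_stdGaussianPDF_le hm hJY hJ
    have hstep := abs_mul_stdGaussianPDF_sub_cdf_sub_le (x := J * √(2 / m)) (2 / m : ℝ).sqrt_nonneg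
    rw [← add_one_mul, ← Nat.cast_succ, Real.sq_sqrt (by positivity)] at hstep
    rw [binomTail_sub_succ (by omega)]
    calc |binomMass m (J + 1) + binomTail m (m - J) - Φ ((J + 1 : ℕ) * √(2 / m))|
        = |binomTail m (m - J) - Φ (J * √(2 / m)) +
            (binomMass m (J + 1) - √(2 / m) * φ ((J + 1 : ℕ) * √(2 / m))) +
            (√(2 / m) * φ ((J + 1 : ℕ) * √(2 / m)) -
              (Φ ((J + 1 : ℕ) * √(2 / m)) - Φ (J * √(2 / m))))| := by ring_nf
      _ ≤ 1 / √m + J * ((2 * Y ^ 3 + 3) / m) + (2 * Y ^ 3 + 1) / m + 2 / m :=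
          (abs_add_three _ _ _).trans
            (add_le_add_three (ih (le_trans (by simp) hJY) (by omega)) hlocal hstep)
      _ = 1 / √m + (J + 1 : ℕ) * ((2 * Y ^ 3 + 3) / m) := by push_cast; ring

lemma abs_binomTail_add_nat_sub_cdf_le {Y : ℝ} (hm : m ≠ 0) (hJY : J ≤ Y * √m) (hJ : 2 * J ≤ m) :
    |binomTail m (m + J) - Φ (-(J * √(2 / m)))| ≤ 2 / √m + J * ((2 * Y ^ 3 + 3) / m) := by
  have hreflect := binomTail_add_binomTail_reflect m J
  have hadd := binomTail_eq_add (show m - J ≤ 2 * m by omega)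
  rw [Nat.cast_sub (by omega), sub_add_eq_add_sub] at hadd
  have hmass := choose_div_four_pow_le hm (m - J)
  have hmass_nonneg : 0 ≤ ((2 * m).choose (m - J) : ℝ) / 4 ^ m := by positivity
  rw [cdf_stdGaussian_neg]
  calc |binomTail m (m + J) - (1 - Φ (J * √(2 / m)))|
      = |((2 * m).choose (m - J) : ℝ) / 4 ^ m - (binomTail m (m - J) - Φ (J * √(2 / m)))| := by
        congr 1
        linarith
    _ ≤ 1 / √m + (1 / √m + J * ((2 * Y ^ 3 + 3) / m)) :=
        (abs_sub _ _).trans (add_le_add ((abs_of_nonneg hmass_nonneg).trans_le hmass)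
          (abs_binomTail_sub_nat_sub_cdf_le hm hJY hJ))
    _ = 2 / √m + J * ((2 * Y ^ 3 + 3) / m) := by ring

lemma abs_binomTail_sub_cdf_le {Y : ℝ} (hm : m ≠ 0) {i : ℤ} (hiY : |(i : ℝ)| ≤ Y * √m)
    (hi : 2 * |i| ≤ m) :
    |binomTail m (m - i) - Φ (i * √(2 / m))| ≤ (2 + Y * (2 * Y ^ 3 + 3)) / √m := by
  have hm' : (0 : ℝ) < m := by positivity
  have hY : 0 ≤ Y := nonneg_of_mul_nonneg_left ((abs_nonneg _).trans hiY) (by positivity)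
  have hbound {J : ℕ} (hJ : J ≤ Y * √m) :
      2 / √m + J * ((2 * Y ^ 3 + 3) / m) ≤ (2 + Y * (2 * Y ^ 3 + 3)) / √m :=
    calc 2 / √m + J * ((2 * Y ^ 3 + 3) / m)
        ≤ 2 / √m + Y * √m * ((2 * Y ^ 3 + 3) / √m ^ 2) := by
          rw [Real.sq_sqrt hm'.le]
          gcongr
      _ = _ := by field_simp
  obtain ⟨J, rfl | rfl⟩ := i.eq_nat_or_neg
  · have hJ : (J : ℝ) ≤ Y * √m := by simpa using hiY
    rw [Nat.abs_cast] at hi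
    refine (abs_binomTail_sub_nat_sub_cdf_le hm hJ (by omega)).trans (le_trans ?_ (hbound hJ))
    gcongr
    norm_num
  · have hJ : (J : ℝ) ≤ Y * √m := by simpa using hiY
    rw [abs_neg, Nat.abs_cast] at hi
    simpa using (abs_binomTail_add_nat_sub_cdf_le hm hJ (by omega)).trans (hbound hJ)

end BinomialTail

/-- The exponential rate, per letter, at which the probability of a word with equally many ones
and zeros decays with its length. -/
noncomputable def decayRate (p : ℝ) : ℝ := log (1 / √(p * (1 - p)))

/-- The absolute log-odds of a letter: the change of the log-probability of a word when one letter
is flipped. -/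
noncomputable def absLogOdds (p : ℝ) : ℝ := |log (p / (1 - p))|

/-- The number `θ` such that, when `1 / 2 < p`, words of length `2 * m` with `m - θ` ones have
probability `1 / n`. -/
noncomputable def thresholdShift (p : ℝ) (n m : ℕ) : ℝ :=
  (log n - 2 * m * decayRate p) / absLogOdds p

section Threshold

variable {p : ℝ} {n m s : ℕ}

lemma decayRate_eq (hp : 0 < p) (hp1 : p < 1) : decayRate p = -(log p + log (1 - p)) / 2 := by
  have hq : 0 < 1 - p := sub_pos.2 hp1
  rw [decayRate, one_div, Real.log_inv, Real.log_sqrt (by positivity),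
    Real.log_mul hp.ne' hq.ne', neg_div]

lemma decayRate_pos (hp : 0 < p) (hp1 : p < 1) : 0 < decayRate p := by
  rw [decayRate_eq hp hp1]
  linarith [Real.log_neg hp hp1, Real.log_neg (sub_pos.2 hp1) (by linarith)]

lemma decayRate_one_sub (p : ℝ) : decayRate (1 - p) = decayRate p := by
  rw [decayRate, decayRate, sub_sub_cancel, mul_comm]

lemma absLogOdds_one_sub (p : ℝ) : absLogOdds (1 - p) = absLogOdds p := by
  rw [absLogOdds, absLogOdds, sub_sub_cancel, ← inv_div, Real.log_inv, abs_neg]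

lemma thresholdShift_one_sub (p : ℝ) (n m : ℕ) :
    thresholdShift (1 - p) n m = thresholdShift p n m := by
  rw [thresholdShift, thresholdShift, decayRate_one_sub, absLogOdds_one_sub]

lemma absLogOdds_eq (hp : 1 / 2 < p) (hp1 : p < 1) : absLogOdds p = log p - log (1 - p) := by
  have hq : 0 < 1 - p := sub_pos.2 hp1
  rw [absLogOdds, abs_of_pos (Real.log_pos ((one_lt_div hq).2 (by linarith))),
    Real.log_div (by linarith) hq.ne']

lemma absLogOdds_pos (hp : 0 < p) (hp1 : p < 1) (hp2 : p ≠ 1 / 2) : 0 < absLogOdds p := by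
  have hq : 0 < 1 - p := sub_pos.2 hp1
  refine abs_pos.2 (Real.log_ne_zero_of_pos_of_ne_one (by positivity) fun h ↦ hp2 ?_)
  linarith [(div_eq_one_iff_eq hq.ne').1 h]

lemma natCast_mul_pow_mul_pow_eq_exp (hp : 1 / 2 < p) (hp1 : p < 1) (hn : n ≠ 0)
    (hs : s ≤ 2 * m) : n * (p ^ s * (1 - p) ^ (2 * m - s)) =
      rexp (absLogOdds p * (thresholdShift p n m - (m - s))) := by
  have hp0 : 0 < p := by linarith
  have : 0 < 1 - p := sub_pos.2 hp1
  have hD := absLogOdds_pos hp0 hp1 hp.ne'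
  rw [← Real.exp_log (show 0 < (n : ℝ) * (p ^ s * (1 - p) ^ (2 * m - s)) by positivity),
    Real.log_mul (by positivity) (by positivity), Real.log_mul (by positivity) (by positivity),
    Real.log_pow, Real.log_pow, Nat.cast_sub hs, mul_sub, thresholdShift, mul_div_cancel₀ _ hD.ne',
    absLogOdds_eq hp hp1, decayRate_eq hp0 hp1]
  push_cast
  ring_nf

lemma abs_atLeastTwo_sub_ite_le {x : ℝ} (hn : 2 ≤ n) (hx : x ∈ Set.Ioc 0 1) :
    |atLeastTwo n x - if 1 ≤ n * x then 1 else 0| ≤ 8 * rexp (-|log (n * x)|) := by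
  have hx' := Set.Ioc_subset_Icc_self hx
  have hnx : 0 < n * x := mul_pos (by positivity) hx.1
  split_ifs with h
  · rw [abs_sub_comm, abs_of_nonneg (sub_nonneg.2 (atLeastTwo_le_one hx')),
      abs_of_nonneg (Real.log_nonneg h), Real.exp_neg, Real.exp_log hnx, ← div_eq_mul_inv]
    exact one_sub_atLeastTwo_le hn hx
  · rw [sub_zero, abs_of_nonneg (atLeastTwo_nonneg (by omega) hx'),
      abs_of_nonpos (Real.log_nonpos hnx.le (not_le.1 h).le), neg_neg, Real.exp_log hnx]
    linarith [atLeastTwo_le_mul (n := n) hx']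

lemma sum_pow_le_inv_one_sub {ρ : ℝ} (h0 : 0 ≤ ρ) (h1 : ρ < 1) {S : Finset ℕ} {g : ℕ → ℕ}
    (hg : Set.InjOn g S) : ∑ s ∈ S, ρ ^ g s ≤ (1 - ρ)⁻¹ := by
  rw [← Finset.sum_image (f := (ρ ^ ·)) hg, ← tsum_geometric_of_lt_one h0 h1]
  exact (summable_geometric_of_lt_one h0 h1).sum_le_tsum _ fun _ _ ↦ by positivity

lemma sum_exp_neg_mul_abs_sub_le {d : ℝ} (hd : 0 < d) (N : ℕ) (y : ℝ) :
    ∑ s ∈ Finset.range N, rexp (-(d * |y - s|)) ≤ rexp d * (2 * (1 - rexp (-d))⁻¹) := by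
  have hρ : rexp (-d) < 1 := Real.exp_lt_one_iff.2 (by linarith)
  have hterm (s : ℕ) : rexp (-(d * |y - s|)) ≤ rexp d * rexp (-d) ^ (⌊y⌋ - s).natAbs := by
    have hfloor : |(⌊y⌋ - s : ℝ)| ≤ |y - s| + 1 :=
      calc |(⌊y⌋ - s : ℝ)| = |(y - s) - Int.fract y| := by rw [Int.fract]; ring_nf
        _ ≤ |y - s| + |Int.fract y| := abs_sub _ _
        _ ≤ |y - s| + 1 := by rw [Int.abs_fract]; gcongr; exact (Int.fract_lt_one y).le
    rw [← Real.exp_nat_mul, ← Real.exp_add, Nat.cast_natAbs]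
    push_cast
    gcongr
    nlinarith
  calc ∑ s ∈ Finset.range N, rexp (-(d * |y - s|))
      ≤ rexp d * ∑ s ∈ Finset.range N, rexp (-d) ^ (⌊y⌋ - s).natAbs := by
        rw [Finset.mul_sum]
        exact Finset.sum_le_sum fun s _ ↦ hterm s
    _ ≤ rexp d * (2 * (1 - rexp (-d))⁻¹) := by
        rw [← Finset.sum_filter_add_sum_filter_not _ (fun s : ℕ ↦ ⌊y⌋ ≤ s), two_mul]
        gcongr <;> refine sum_pow_le_inv_one_sub (Real.exp_pos _).le hρ fun i hi j hj hij ↦ ?_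
        all_goals
          simp only [Finset.coe_filter, Finset.mem_range, Set.mem_ofPred_eq] at hi hj hij
          omega

lemma wordAvg_two_mul (p : ℝ) (m : ℕ) (f : ℝ → ℝ) :
    wordAvg p (2 * m) f = ∑ s ∈ Finset.range (2 * m + 1),
      (2 * m).choose s / 4 ^ m * f (p ^ s * (1 - p) ^ (2 * m - s)) := by
  rw [wordAvg_eq_sum_choose, pow_mul, Finset.sum_div]
  exact Finset.sum_congr rfl fun s _ ↦ by ring

lemma pow_mul_pow_mem_Ioc (hp : 0 < p) (hp1 : p < 1) (i j : ℕ) :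
    p ^ i * (1 - p) ^ j ∈ Set.Ioc 0 1 := by
  have hq : 0 < 1 - p := sub_pos.2 hp1
  exact ⟨by positivity, mul_le_one₀ (pow_le_one₀ hp.le hp1.le) (by positivity)
    (pow_le_one₀ hq.le (by linarith))⟩

lemma wordAvg_indicator (hp : 1 / 2 < p) (hp1 : p < 1) (hn : n ≠ 0) (m : ℕ) :
    wordAvg p (2 * m) (fun x ↦ if 1 ≤ n * x then 1 else 0) =
      binomTail m (m - ⌊thresholdShift p n m⌋) := by
  rw [wordAvg_two_mul, binomTail, Finset.sum_div, Finset.sum_filter]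
  refine Finset.sum_congr rfl fun s hs ↦ ?_
  have hiff : 1 ≤ n * (p ^ s * (1 - p) ^ (2 * m - s)) ↔ m - ⌊thresholdShift p n m⌋ ≤ (s : ℤ) := by
    rw [natCast_mul_pow_mul_pow_eq_exp hp hp1 hn (Finset.mem_range_succ_iff.1 hs),
      Real.one_le_exp_iff,
      mul_nonneg_iff_of_pos_left (absLogOdds_pos (by linarith) hp1 hp.ne'), sub_nonneg,
      sub_le_comm (c := (s : ℤ)), Int.le_floor]
    push_cast
    rfl
  simp only [hiff, mul_ite, mul_one, mul_zero]

lemma abs_wordAvg_sub_binomTail_le (hp : 1 / 2 < p) (hp1 : p < 1) (hn : 2 ≤ n) (hm : m ≠ 0) :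
    |wordAvg p (2 * m) (atLeastTwo n) - binomTail m (m - ⌊thresholdShift p n m⌋)| ≤
      8 * (rexp (absLogOdds p) * (2 * (1 - rexp (-absLogOdds p))⁻¹)) / √m := by
  have hp0 : 0 < p := by linarith
  have hD := absLogOdds_pos hp0 hp1 hp.ne'
  rw [← wordAvg_indicator hp hp1 (by omega), ← wordAvg_sub, wordAvg_two_mul]
  refine (Finset.abs_sum_le_sum_abs _ _).trans ?_
  calc _ ≤ ∑ s ∈ Finset.range (2 * m + 1),
        1 / √m * (8 * rexp (-(absLogOdds p * |m - thresholdShift p n m - s|))) := by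
        refine Finset.sum_le_sum fun s hs ↦ ?_
        have hlog : |log (n * (p ^ s * (1 - p) ^ (2 * m - s)))| =
            absLogOdds p * |m - thresholdShift p n m - s| := by
          rw [natCast_mul_pow_mul_pow_eq_exp hp hp1 (by omega) (Finset.mem_range_succ_iff.1 hs),
            Real.log_exp, abs_mul, abs_of_pos hD, abs_sub_comm, sub_right_comm]
        have happrox := abs_atLeastTwo_sub_ite_le hn (pow_mul_pow_mem_Ioc hp0 hp1 s (2 * m - s))
        rw [hlog] at happrox
        rw [abs_mul, abs_of_nonneg (by positivity)]
        exact mul_le_mul (choose_div_four_pow_le hm s) happrox (abs_nonneg _) (by positivity)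
    _ = 8 * (∑ s ∈ Finset.range (2 * m + 1),
          rexp (-(absLogOdds p * |m - thresholdShift p n m - s|))) / √m := by
        rw [← Finset.mul_sum, ← Finset.mul_sum]
        ring
    _ ≤ _ := by
        gcongr
        exact sum_exp_neg_mul_abs_sub_le hD _ _

lemma abs_floor_le_mul_sqrt {θ Y : ℝ} (hm : m ≠ 0) (hθ : |θ| ≤ Y * √m) :
    |(⌊θ⌋ : ℝ)| ≤ (Y + 1) * √m := by
  have : 1 ≤ √(m : ℝ) := Real.one_le_sqrt.2 (by exact_mod_cast Nat.one_le_iff_ne_zero.2 hm)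
  calc |(⌊θ⌋ : ℝ)| = |θ - Int.fract θ| := by rw [Int.self_sub_fract]
    _ ≤ |θ| + |Int.fract θ| := abs_sub _ _
    _ ≤ Y * √m + 1 := by rw [Int.abs_fract]; gcongr; exact (Int.fract_lt_one θ).le
    _ ≤ (Y + 1) * √m := by linarith

lemma two_mul_abs_le_of_abs_le_mul_sqrt {i : ℤ} {Y : ℝ} (hi : |(i : ℝ)| ≤ Y * √m)
    (hY : 2 * Y ≤ √m) : 2 * |i| ≤ m := by
  have hcast : 2 * |(i : ℝ)| ≤ m := by
    calc 2 * |(i : ℝ)| ≤ 2 * Y * √m := by linarith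
      _ ≤ √m * √m := by gcongr
      _ = m := Real.mul_self_sqrt (by positivity)
  exact_mod_cast hcast

lemma abs_floor_mul_sqrt_sub_le (θ : ℝ) (m : ℕ) :
    |⌊θ⌋ * √(2 / m) - θ * √(2 / m)| ≤ 2 / √m := by
  have hsqrt : √(2 / m) ≤ 2 / √(m : ℝ) := by
    rw [Real.sqrt_div zero_le_two]
    gcongr
    exact Real.sqrt_le_iff.2 (by norm_num)
  rw [← sub_mul, abs_mul, abs_sub_comm, Int.self_sub_floor, Int.abs_fract,
    abs_of_nonneg (Real.sqrt_nonneg _)]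
  exact (mul_le_of_le_one_left (Real.sqrt_nonneg _) (Int.fract_lt_one θ).le).trans hsqrt

lemma ne_zero_of_pos_le_sqrt {y : ℝ} (hy : 0 < y) (hm : y ≤ √m) : m ≠ 0 := by
  rintro rfl
  norm_num at hm
  linarith

lemma exists_abs_wordAvg_sub_cdf_le (hp : 0 < p) (hp1 : p < 1) (hp2 : p ≠ 1 / 2) {Y : ℝ}
    (hY : 0 ≤ Y) :
    ∃ C > 0, ∀ m n : ℕ, 2 ≤ n → 2 * (Y + 1) ≤ √m → |thresholdShift p n m| ≤ Y * √m →
      |wordAvg p (2 * m) (atLeastTwo n) - Φ (thresholdShift p n m * √(2 / m))| ≤ C / √m := by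
  wlog hhalf : 1 / 2 < p generalizing p
  · simpa only [wordAvg_one_sub, thresholdShift_one_sub] using
      this (sub_pos.2 hp1) (sub_lt_self 1 hp) (by contrapose! hp2; linarith)
        (by grind)
  have : 0 < 1 - rexp (-absLogOdds p) :=
    sub_pos.2 (Real.exp_lt_one_iff.2 (neg_lt_zero.2 (absLogOdds_pos hp hp1 hp2)))
  refine ⟨8 * (rexp (absLogOdds p) * (2 * (1 - rexp (-absLogOdds p))⁻¹)) +
    (2 + (Y + 1) * (2 * (Y + 1) ^ 3 + 3)) + 2, by positivity, fun m n hn hmY hθ ↦ ?_⟩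
  have hm : m ≠ 0 := ne_zero_of_pos_le_sqrt (by positivity) hmY
  have hfloor := abs_floor_le_mul_sqrt hm hθ
  rw [add_div, add_div]
  refine (abs_sub_le _ (Φ (⌊thresholdShift p n m⌋ * √(2 / m))) _).trans (add_le_add
    ((abs_sub_le _ (binomTail m (m - ⌊thresholdShift p n m⌋)) _).trans (add_le_add
      (abs_wordAvg_sub_binomTail_le hhalf hp1 hn hm)
      (abs_binomTail_sub_cdf_le hm hfloor (two_mul_abs_le_of_abs_le_mul_sqrt hfloor hmY))))
    ((abs_cdf_stdGaussian_sub_le _ _).trans (abs_floor_mul_sqrt_sub_le _ _)))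

lemma exp_div_sqrt_le_choose_sub {Y : ℝ} (hm : m ≠ 0) {i : ℤ} (hiY : |(i : ℝ)| ≤ Y * √m)
    (hi : 2 * |i| ≤ m) (hs : (s : ℤ) = m - i) :
    rexp (-(2 * Y ^ 2)) / 4 / √m ≤ (2 * m).choose s / 4 ^ m := by
  rw [Int.abs_eq_natAbs] at hi
  refine (exp_div_sqrt_le_binomMass (j := i.natAbs) hm ?_ (by omega)).trans_eq ?_
  · rw [Nat.cast_natAbs]
    exact_mod_cast hiY
  rcases le_or_gt 0 i with h | h
  · rw [binomMass_eq_choose_sub (by omega), show m - i.natAbs = s by omega]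
  · rw [binomMass, show m + i.natAbs = s by omega]

lemma natCast_mul_pow_mul_pow_mem_Icc (hp : 1 / 2 < p) (hp1 : p < 1) (hn : n ≠ 0)
    (hs2 : s ≤ 2 * m) (hs : (s : ℤ) = m - ⌊thresholdShift p n m⌋) :
    n * (p ^ s * (1 - p) ^ (2 * m - s)) ∈ Set.Icc 1 (rexp (absLogOdds p)) := by
  have hD := absLogOdds_pos (by linarith) hp1 hp.ne'
  have hs' : (s : ℝ) = m - ⌊thresholdShift p n m⌋ := by exact_mod_cast hs
  rw [natCast_mul_pow_mul_pow_eq_exp hp hp1 hn hs2, hs', sub_sub_cancel, Int.self_sub_floor]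
  exact ⟨Real.one_le_exp (mul_nonneg hD.le (Int.fract_nonneg _)),
    Real.exp_le_exp.2 (mul_le_of_le_one_right hD.le (Int.fract_lt_one _).le)⟩

lemma levelDrop_lower_bound_of_shift (hp : 1 / 2 < p) (hp1 : p < 1)
    (hn : 2 * rexp (absLogOdds p) ≤ n) (hs2 : s ≤ 2 * m)
    (hs : (s : ℤ) = m - ⌊thresholdShift p n m⌋) {j : ℕ} (hj : j ≤ 1) :
    p * (1 - p) * (1 - p) ^ 2 * rexp (-2 * rexp (absLogOdds p)) / 4 ≤
      levelDrop p n (p ^ s * (1 - p) ^ (2 * m + j - s)) := by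
  have hq : 0 < 1 - p := sub_pos.2 hp1
  have hn2 : 2 ≤ n := by
    have hexp := Real.one_le_exp (absLogOdds_pos (by linarith) hp1 hp.ne').le
    exact_mod_cast (by linarith : (2 : ℝ) ≤ n)
  obtain ⟨hlow, hupp⟩ := natCast_mul_pow_mul_pow_mem_Icc hp hp1 (by omega) hs2 hs
  have hatom : n * (p ^ s * (1 - p) ^ (2 * m + j - s)) =
      (1 - p) ^ j * (n * (p ^ s * (1 - p) ^ (2 * m - s))) := by
    rw [show 2 * m + j - s = j + (2 * m - s) by omega, pow_add]
    ring
  refine levelDrop_lower_bound (by linarith) hp1.le hq ?_ ?_ hn hn2 <;> rw [hatom]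
  · calc 1 - p ≤ (1 - p) ^ j * 1 := by
          rw [mul_one]
          exact (pow_one (1 - p)).symm.trans_le (pow_le_pow_of_le_one hq.le (by linarith) hj)
      _ ≤ _ := by gcongr
  · exact (mul_le_of_le_one_left (by linarith) (pow_le_one₀ hq.le (by linarith))).trans hupp

lemma exists_div_sqrt_le_wordAvg_sub_succ (hp : 0 < p) (hp1 : p < 1) (hp2 : p ≠ 1 / 2)
    {Y : ℝ} (hY : 0 ≤ Y) :
    ∃ c > 0, ∀ m n j : ℕ, 2 * rexp (absLogOdds p) ≤ n → 2 * (Y + 1) ≤ √m →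
      |thresholdShift p n m| ≤ Y * √m → j ≤ 1 →
      c / √m ≤ wordAvg p (2 * m + j) (atLeastTwo n) - wordAvg p (2 * m + j + 1) (atLeastTwo n) := by
  wlog hhalf : 1 / 2 < p generalizing p
  · simpa only [wordAvg_one_sub, thresholdShift_one_sub, absLogOdds_one_sub] using
      this (sub_pos.2 hp1) (sub_lt_self 1 hp) (by contrapose! hp2; linarith)
        (by grind)
  have : 0 < 1 - p := sub_pos.2 hp1
  set a := p * (1 - p) * (1 - p) ^ 2 * rexp (-2 * rexp (absLogOdds p)) / 4
  refine ⟨rexp (-(2 * (Y + 1) ^ 2)) / 4 / 2 * a, by positivity, fun m n j hn hmY hθ hj ↦ ?_⟩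
  have hm : m ≠ 0 := ne_zero_of_pos_le_sqrt (by positivity) hmY
  have hfloor := abs_floor_le_mul_sqrt hm hθ
  have hfloor2 := two_mul_abs_le_of_abs_le_mul_sqrt hfloor hmY
  have hn0 : n ≠ 0 := Nat.cast_ne_zero.1 (lt_of_lt_of_le (by positivity) hn).ne'
  obtain ⟨hlow, hupp⟩ := abs_le'.1 (show |⌊thresholdShift p n m⌋| ≤ m by
    linarith [abs_nonneg ⌊thresholdShift p n m⌋])
  obtain ⟨s, hs⟩ := Int.eq_ofNat_of_zero_le (show 0 ≤ m - ⌊thresholdShift p n m⌋ by omega)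
  have hs2 : s ≤ 2 * m := by omega
  have hchoose : ((2 * m).choose s : ℝ) / 4 ^ m / 2 ≤ (2 * m + j).choose s / 2 ^ (2 * m + j) := by
    have hpow : (2 : ℝ) ^ j ≤ 2 := by
      simpa only [pow_one] using pow_le_pow_right₀ (one_le_two (α := ℝ)) hj
    rw [pow_add, pow_mul, div_div, show (2 : ℝ) ^ 2 = 4 by norm_num]
    gcongr
    omega
  rw [← wordAvg_levelDrop]
  calc _ = rexp (-(2 * (Y + 1) ^ 2)) / 4 / √m / 2 * a := by ring
    _ ≤ (2 * m).choose s / 4 ^ m / 2 * a := by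
        have := exp_div_sqrt_le_choose_sub hm hfloor hfloor2 hs.symm
        gcongr ?_ / 2 * a
    _ ≤ (2 * m + j).choose s / 2 ^ (2 * m + j) *
          levelDrop p n (p ^ s * (1 - p) ^ (2 * m + j - s)) :=
        mul_le_mul hchoose (levelDrop_lower_bound_of_shift hhalf hp1 hn hs2 hs.symm hj)
          (by positivity) (by positivity)
    _ ≤ _ := choose_mul_le_wordAvg hp.le hp1.le (fun x hx ↦ levelDrop_nonneg hn0 hp.le hp1.le hx)
        (by omega)

end Threshold

/-- The square root of `log_{1/√(p(1-p))} n`. The mean proportion of filled words falls from `1` to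
`0` around level `levelScale p n ^ 2`, within a window whose width is of order `levelScale p n`. -/
noncomputable def levelScale (p : ℝ) (n : ℕ) : ℝ := √(log n / decayRate p)

/-- The slope with which the level, measured in units of `levelScale`, enters the argument of the
normal distribution function in the limit profile of the mean proportion of filled words. -/
noncomputable def profileSlope (p : ℝ) : ℝ := 2 * decayRate p / absLogOdds p

/-- The argument at which the normal distribution function approximates the mean proportion of
filled words of length `k`. -/
noncomputable def normalArg (p : ℝ) (n k : ℕ) : ℝ :=
  profileSlope p * ((levelScale p n ^ 2 - k) / levelScale p n)

section Window

variable {p A : ℝ} {n m k l : ℕ}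

lemma profileSlope_pos (hp : 0 < p) (hp1 : p < 1) (hp2 : p ≠ 1 / 2) : 0 < profileSlope p :=
  div_pos (mul_pos two_pos (decayRate_pos hp hp1)) (absLogOdds_pos hp hp1 hp2)

lemma tendsto_levelScale (hp : 0 < p) (hp1 : p < 1) : Tendsto (levelScale p) atTop atTop :=
  Real.tendsto_sqrt_atTop.comp <| (Real.tendsto_log_atTop.comp
    tendsto_natCast_atTop_atTop).atTop_div_const (decayRate_pos hp hp1)

lemma sq_levelScale (hp : 0 < p) (hp1 : p < 1) (n : ℕ) :
    levelScale p n ^ 2 = log n / decayRate p :=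
  Real.sq_sqrt (div_nonneg (Real.log_natCast_nonneg n) (decayRate_pos hp hp1).le)

lemma thresholdShift_eq (hp : 0 < p) (hp1 : p < 1) (n m : ℕ) :
    thresholdShift p n m = profileSlope p / 2 * (levelScale p n ^ 2 - 2 * m) := by
  have hL := decayRate_pos hp hp1
  rw [thresholdShift, profileSlope, sq_levelScale hp hp1]
  field_simp

lemma abs_normalArg_sub (hw : 0 < levelScale p n) (hs : 0 < profileSlope p) (k l : ℕ) :
    |normalArg p n k - normalArg p n l| = profileSlope p * |(k : ℝ) - l| / levelScale p n := by
  rw [normalArg, normalArg, ← mul_sub, ← sub_div, sub_sub_sub_cancel_left, abs_mul, abs_div,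
    abs_of_pos hs, abs_of_pos hw, abs_sub_comm, mul_div_assoc]

lemma abs_normalArg_le (hw : 0 < levelScale p n) (hs : 0 < profileSlope p)
    (hk : |k - levelScale p n ^ 2| ≤ A * levelScale p n) :
    |normalArg p n k| ≤ profileSlope p * A := by
  rw [normalArg, abs_mul, abs_div, abs_of_pos hs, abs_of_pos hw, abs_sub_comm]
  gcongr
  exact (div_le_iff₀ hw).2 hk

lemma half_le_sqrt_and_sqrt_le {w : ℝ} (hw : 0 ≤ w) (hA : 2 * A ≤ w)
    (hm : |2 * m - w ^ 2| ≤ A * w) : w / 2 ≤ √m ∧ √m ≤ w := by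
  obtain ⟨hlow, hupp⟩ := abs_le.1 hm
  exact ⟨Real.le_sqrt_of_sq_le (by nlinarith), (Real.sqrt_le_left hw).2 (by nlinarith)⟩

lemma abs_div_sqrt_sub_div_le {w t : ℝ} (hw : 0 < w) (hA : 2 * A ≤ w)
    (ht : |t - w ^ 2| ≤ A * w) :
    |(w ^ 2 - t) / √t - (w ^ 2 - t) / w| ≤ 2 * A ^ 2 / w := by
  have hsqrt : w / 2 ≤ √t := Real.le_sqrt_of_sq_le (by nlinarith [abs_le.1 ht])
  have hsqrt0 : 0 < √t := by linarith
  have ht0 : √t ^ 2 = t := Real.sq_sqrt (Real.sqrt_pos.1 hsqrt0).le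
  have hdiff : (w ^ 2 - t) / √t - (w ^ 2 - t) / w = (t - w ^ 2) ^ 2 / (√t * w * (w + √t)) := by
    field_simp
    linear_combination (t - w ^ 2) * ht0
  rw [hdiff, abs_of_nonneg (by positivity)]
  calc (t - w ^ 2) ^ 2 / (√t * w * (w + √t)) ≤ (A * w) ^ 2 / (w / 2 * w * w) := by
        gcongr ?_ / ?_
        · exact sq_le_sq.2 (ht.trans (le_abs_self _))
        · gcongr
          linarith
    _ = 2 * A ^ 2 / w := by field_simp

lemma abs_thresholdShift_mul_sqrt_sub_le (hp : 0 < p) (hp1 : p < 1) (hs : 0 < profileSlope p)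
    (hw : 0 < levelScale p n) (hA : 2 * A ≤ levelScale p n)
    (hm : |2 * m - levelScale p n ^ 2| ≤ A * levelScale p n) :
    |thresholdShift p n m * √(2 / m) - normalArg p n (2 * m)| ≤
      profileSlope p * (2 * A ^ 2) / levelScale p n := by
  have hsqrt : √(2 / (m : ℝ)) = 2 / √(2 * m) := by
    rw [Real.sqrt_div zero_le_two, Real.sqrt_mul zero_le_two, ← div_div, Real.div_sqrt]
  rw [thresholdShift_eq hp hp1, normalArg, hsqrt, Nat.cast_mul, Nat.cast_ofNat,
    show ∀ u v : ℝ, profileSlope p / 2 * u * (2 / v) = profileSlope p * (u / v) by intros; ring,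
    ← mul_sub, abs_mul, abs_of_pos hs, mul_div_assoc]
  gcongr
  exact abs_div_sqrt_sub_div_le hw hA hm

lemma abs_thresholdShift_le (hp : 0 < p) (hp1 : p < 1) (hs : 0 < profileSlope p) (hA0 : 0 ≤ A)
    (hm : |2 * m - levelScale p n ^ 2| ≤ A * levelScale p n)
    (hsqrt : levelScale p n / 2 ≤ √m) : |thresholdShift p n m| ≤ profileSlope p * A * √m := by
  rw [thresholdShift_eq hp hp1, abs_mul, abs_of_pos (half_pos hs), abs_sub_comm]
  calc profileSlope p / 2 * |2 * m - levelScale p n ^ 2|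
      ≤ profileSlope p / 2 * (A * levelScale p n) := by gcongr
    _ = profileSlope p * A * (levelScale p n / 2) := by ring
    _ ≤ profileSlope p * A * √m := by gcongr

lemma exists_abs_wordAvg_two_mul_sub_cdf_normalArg_le (hp : 0 < p) (hp1 : p < 1)
    (hp2 : p ≠ 1 / 2) (hA : 0 ≤ A) :
    ∃ C > 0, ∀ᶠ n in atTop, ∀ m : ℕ, |2 * m - levelScale p n ^ 2| ≤ A * levelScale p n →
      |wordAvg p (2 * m) (atLeastTwo n) - Φ (normalArg p n (2 * m))| ≤ C / levelScale p n := by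
  have hs := profileSlope_pos hp hp1 hp2
  obtain ⟨C, hC, hbound⟩ := exists_abs_wordAvg_sub_cdf_le hp hp1 hp2 (mul_nonneg hs.le hA)
  refine ⟨2 * C + profileSlope p * (2 * A ^ 2), by positivity, ?_⟩
  filter_upwards [eventually_ge_atTop 2, (tendsto_levelScale hp hp1).eventually_gt_atTop 0,
    (tendsto_levelScale hp hp1).eventually_ge_atTop (2 * A),
    (tendsto_levelScale hp hp1).eventually_ge_atTop (2 * (2 * (profileSlope p * A + 1)))]
    with n hn hw hwA hwY m hm
  obtain ⟨hlow, -⟩ := half_le_sqrt_and_sqrt_le hw.le hwA hm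
  rw [add_div]
  refine (abs_sub_le _ (Φ (thresholdShift p n m * √(2 / m))) _).trans (add_le_add ?_ ?_)
  · calc _ ≤ C / √m := hbound m n hn (by linarith) (abs_thresholdShift_le hp hp1 hs hA hm hlow)
      _ ≤ C / (levelScale p n / 2) := by gcongr
      _ = 2 * C / levelScale p n := by field_simp
  · exact (abs_cdf_stdGaussian_sub_le _ _).trans
      (abs_thresholdShift_mul_sqrt_sub_le hp hp1 hs hw hwA hm)

lemma abs_sub_sq_le_of_abs_sub_le_one {w x y : ℝ} (hw : 1 ≤ w) (hxy : |x - y| ≤ 1)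
    (hy : |y - w ^ 2| ≤ A * w) : |x - w ^ 2| ≤ (A + 1) * w := by
  linarith [abs_sub_le x y (w ^ 2)]

lemma exists_abs_wordAvg_sub_cdf_normalArg_le (hp : 0 < p) (hp1 : p < 1) (hp2 : p ≠ 1 / 2)
    (hA : 0 ≤ A) :
    ∃ C > 0, ∀ᶠ n in atTop, ∀ k : ℕ, |k - levelScale p n ^ 2| ≤ A * levelScale p n →
      |wordAvg p k (atLeastTwo n) - Φ (normalArg p n k)| ≤ C / levelScale p n := by
  have hs := profileSlope_pos hp hp1 hp2
  obtain ⟨C, hC, heven⟩ := exists_abs_wordAvg_two_mul_sub_cdf_normalArg_le hp hp1 hp2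
    (show 0 ≤ A + 1 by positivity)
  refine ⟨C + profileSlope p, by positivity, ?_⟩
  filter_upwards [heven, eventually_ne_atTop 0, (tendsto_levelScale hp hp1).eventually_ge_atTop 1]
    with n hn hn0 hw1 k hk
  have hw : 0 < levelScale p n := by linarith
  have hnear (m : ℕ) (hm : |((2 * m : ℕ) : ℝ) - k| ≤ 1) :
      |wordAvg p (2 * m) (atLeastTwo n) - Φ (normalArg p n k)| ≤
        (C + profileSlope p) / levelScale p n := by
    have hwin := abs_sub_sq_le_of_abs_sub_le_one hw1 hm hk
    rw [add_div]
    refine (abs_sub_le _ (Φ (normalArg p n (2 * m))) _).trans (add_le_add (hn m ?_) ?_)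
    · exact_mod_cast hwin
    · refine (abs_cdf_stdGaussian_sub_le _ _).trans ?_
      rw [abs_normalArg_sub hw hs]
      gcongr
      exact mul_le_of_le_one_right hs.le hm
  have hanti := antitone_wordAvg_atLeastTwo hn0 hp.le hp1.le
  obtain ⟨m, rfl | rfl⟩ := Nat.even_or_odd' k
  · exact hnear m (by norm_num)
  · have hleft := hnear m (by push_cast; norm_num)
    have hright := hnear (m + 1) (by push_cast; norm_num [mul_add, abs_le])
    rw [abs_le] at hleft hright ⊢
    have hle1 := hanti (show 2 * m ≤ 2 * m + 1 by omega)
    have hle2 := hanti (show 2 * m + 1 ≤ 2 * (m + 1) by omega)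
    dsimp only at hle1 hle2
    constructor <;> linarith

lemma exists_div_levelScale_le_wordAvg_sub_succ (hp : 0 < p) (hp1 : p < 1) (hp2 : p ≠ 1 / 2)
    (hA : 0 ≤ A) :
    ∃ c > 0, ∀ᶠ n in atTop, ∀ k : ℕ, |k - levelScale p n ^ 2| ≤ A * levelScale p n →
      c / levelScale p n ≤ wordAvg p k (atLeastTwo n) - wordAvg p (k + 1) (atLeastTwo n) := by
  have hs := profileSlope_pos hp hp1 hp2
  have hA1 : 0 ≤ A + 1 := by positivity
  obtain ⟨c, hc, hbound⟩ := exists_div_sqrt_le_wordAvg_sub_succ hp hp1 hp2 (mul_nonneg hs.le hA1)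
  refine ⟨c, hc, ?_⟩
  filter_upwards [tendsto_natCast_atTop_atTop.eventually_ge_atTop (2 * rexp (absLogOdds p)),
    (tendsto_levelScale hp hp1).eventually_ge_atTop 1,
    (tendsto_levelScale hp hp1).eventually_ge_atTop (2 * (A + 1)),
    (tendsto_levelScale hp hp1).eventually_ge_atTop (2 * (2 * (profileSlope p * (A + 1) + 1)))]
    with n hn hw1 hwA hwY k hk
  obtain ⟨m, j, hj, rfl⟩ : ∃ m j, j ≤ 1 ∧ k = 2 * m + j :=
    ⟨k / 2, k % 2, by omega, (Nat.div_add_mod k 2).symm⟩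
  have hm : |2 * m - levelScale p n ^ 2| ≤ (A + 1) * levelScale p n := by
    refine abs_sub_sq_le_of_abs_sub_le_one hw1 ?_ hk
    push_cast
    rw [sub_add_cancel_left, abs_neg, Nat.abs_cast]
    exact_mod_cast hj
  obtain ⟨hlow, hupp⟩ := half_le_sqrt_and_sqrt_le (by linarith) hwA hm
  have hsqrt : 0 < √(m : ℝ) := by linarith
  calc c / levelScale p n ≤ c / √m := by gcongr
    _ ≤ _ := hbound m n j hn (by linarith) (abs_thresholdShift_le hp hp1 hs hA1 hm hlow) hj

end Window

section Localization

variable {p x : ℝ}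

lemma exists_ge_and_succ_lt {f : ℕ → ℝ} {a b : ℕ} {y : ℝ} (hab : a ≤ b) (ha : y ≤ f a)
    (hb : f b < y) : ∃ k, a ≤ k ∧ k < b ∧ y ≤ f k ∧ f (k + 1) < y := by
  classical
  have hex : ∃ j, a ≤ j ∧ f j < y := ⟨b, hab, hb⟩
  obtain ⟨haj, hlt⟩ := Nat.find_spec hex
  have hne : Nat.find hex ≠ a := by
    intro h
    rw [h] at hlt
    exact hlt.not_ge ha
  refine ⟨Nat.find hex - 1, by omega, ?_, not_lt.1 fun h ↦ ?_, ?_⟩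
  · have := Nat.find_min' hex ⟨hab, hb⟩
    omega
  · exact Nat.find_min hex (m := Nat.find hex - 1) (by omega) ⟨by omega, h⟩
  · rwa [Nat.sub_add_cancel (by omega)]

lemma strictMono_cdf_stdGaussian : StrictMono Φ := by
  refine (monotone_cdf _).strictMono_of_injective fun x y hxy ↦ ?_
  have h := mul_abs_sub_le_abs_cdf_stdGaussian_sub (le_max_left |x| |y|) (le_max_right |x| |y|)
  rw [hxy, sub_self, abs_zero] at h
  exact sub_eq_zero.1 (abs_nonpos_iff.1 (nonpos_of_mul_nonpos_right h (stdGaussianPDF_pos _)))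

lemma le_normalArg_iff {n k : ℕ} (hw : 0 < levelScale p n) (hs : 0 < profileSlope p) :
    x ≤ normalArg p n k ↔ k ≤ levelScale p n ^ 2 - x / profileSlope p * levelScale p n := by
  rw [normalArg, ← div_le_iff₀' hs, le_div_iff₀ hw, le_sub_comm]

lemma normalArg_le_iff {n k : ℕ} (hw : 0 < levelScale p n) (hs : 0 < profileSlope p) :
    normalArg p n k ≤ x ↔ levelScale p n ^ 2 - x / profileSlope p * levelScale p n ≤ k := by
  rw [normalArg, ← le_div_iff₀' hs, div_le_iff₀ hw, sub_le_comm]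

lemma exists_le_normalArg_and_exists_normalArg_le {n : ℕ} {y Y : ℝ} (hs : 0 < profileSlope p)
    (hy : |y| ≤ Y) (hw1 : 1 ≤ levelScale p n) (hw : Y / profileSlope p ≤ levelScale p n) :
    (∃ k : ℕ, |k - levelScale p n ^ 2| ≤ (Y / profileSlope p + 1) * levelScale p n ∧
      y ≤ normalArg p n k) ∧
    ∃ k : ℕ, |k - levelScale p n ^ 2| ≤ (Y / profileSlope p + 1) * levelScale p n ∧
      normalArg p n k ≤ y := by
  have hw0 : 0 < levelScale p n := by linarith
  have hyY : |y / profileSlope p| ≤ Y / profileSlope p := by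
    rw [abs_div, abs_of_pos hs]
    gcongr
  set t := levelScale p n ^ 2 - y / profileSlope p * levelScale p n with ht
  have ht0 : 0 ≤ t := by
    rw [ht, sub_nonneg, sq]
    gcongr
    exact (le_abs_self _).trans (hyY.trans hw)
  have hwindow (k : ℕ) (hk : |k - t| ≤ 1) :
      |k - levelScale p n ^ 2| ≤ (Y / profileSlope p + 1) * levelScale p n := by
    refine abs_sub_sq_le_of_abs_sub_le_one hw1 hk ?_
    rw [ht, sub_sub_cancel_left, abs_neg, abs_mul, abs_of_pos hw0]
    gcongr
  have hfloor := Nat.floor_le ht0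
  have hceil := Nat.le_ceil t
  refine ⟨⟨⌊t⌋₊, hwindow _ (abs_le.2 ?_), (le_normalArg_iff hw0 hs).2 hfloor⟩,
    ⟨⌈t⌉₊, hwindow _ (abs_le.2 ?_), (normalArg_le_iff hw0 hs).2 hceil⟩⟩
  · constructor <;> linarith [Nat.lt_floor_add_one t]
  · constructor <;> linarith [Nat.ceil_lt_add_one ht0]

lemma eventually_exists_le_wordAvg (hp : 0 < p) (hp1 : p < 1) (hp2 : p ≠ 1 / 2) (x : ℝ) :
    ∀ᶠ n in atTop, ∃ k : ℕ,
      |k - levelScale p n ^ 2| ≤ ((|x| + 1) / profileSlope p + 1) * levelScale p n ∧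
      Φ x + 1 / levelScale p n ^ 2 ≤ wordAvg p k (atLeastTwo n) := by
  have hs := profileSlope_pos hp hp1 hp2
  have hscale := tendsto_levelScale hp hp1
  obtain ⟨C, -, hprofile⟩ := exists_abs_wordAvg_sub_cdf_normalArg_le hp hp1 hp2
    (show 0 ≤ (|x| + 1) / profileSlope p + 1 by positivity)
  have hlim : Tendsto (fun n ↦ C / levelScale p n + 1 / levelScale p n ^ 2) atTop (nhds (0 + 0)) :=
    (hscale.const_div_atTop C).add
      (((tendsto_pow_atTop two_ne_zero).comp hscale).const_div_atTop 1)
  have hgap : 0 + 0 < Φ (x + 1) - Φ x := by linarith [strictMono_cdf_stdGaussian (lt_add_one x)]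
  filter_upwards [hprofile, hscale.eventually_ge_atTop 1,
    hscale.eventually_ge_atTop ((|x| + 1) / profileSlope p), hlim.eventually_lt_const hgap]
    with n hn hw1 hwx herr
  obtain ⟨⟨k, hk, hxk⟩, -⟩ := exists_le_normalArg_and_exists_normalArg_le hs
    ((abs_add_le x 1).trans_eq (by rw [abs_one])) hw1 hwx
  exact ⟨k, hk, by linarith [(abs_le.1 (hn k hk)).1, monotone_cdf (gaussianReal 0 1) hxk]⟩

lemma eventually_exists_wordAvg_lt (hp : 0 < p) (hp1 : p < 1) (hp2 : p ≠ 1 / 2) (x : ℝ) :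
    ∀ᶠ n in atTop, ∃ k : ℕ,
      |k - levelScale p n ^ 2| ≤ ((|x| + 1) / profileSlope p + 1) * levelScale p n ∧
      wordAvg p k (atLeastTwo n) < Φ x := by
  have hs := profileSlope_pos hp hp1 hp2
  have hscale := tendsto_levelScale hp hp1
  obtain ⟨C, -, hprofile⟩ := exists_abs_wordAvg_sub_cdf_normalArg_le hp hp1 hp2
    (show 0 ≤ (|x| + 1) / profileSlope p + 1 by positivity)
  have hgap : 0 < Φ x - Φ (x - 1) := sub_pos.2 (strictMono_cdf_stdGaussian (sub_one_lt x))
  filter_upwards [hprofile, hscale.eventually_ge_atTop 1,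
    hscale.eventually_ge_atTop ((|x| + 1) / profileSlope p),
    (hscale.const_div_atTop C).eventually_lt_const hgap] with n hn hw1 hwx herr
  obtain ⟨-, k, hk, hkx⟩ := exists_le_normalArg_and_exists_normalArg_le hs
    ((abs_sub x 1).trans_eq (by rw [abs_one])) hw1 hwx
  exact ⟨k, hk, by linarith [(abs_le.1 (hn k hk)).2, monotone_cdf (gaussianReal 0 1) hkx]⟩

lemma exists_level_straddling (hp : 0 < p) (hp1 : p < 1) (hp2 : p ≠ 1 / 2) (x : ℝ) :
    ∃ A ≥ 0, ∀ᶠ n in atTop, ∃ k : ℕ, |k - levelScale p n ^ 2| ≤ A * levelScale p n ∧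
      |(k + 1 : ℕ) - levelScale p n ^ 2| ≤ A * levelScale p n ∧
      Φ x + 1 / levelScale p n ^ 2 ≤ wordAvg p k (atLeastTwo n) ∧
      wordAvg p (k + 1) (atLeastTwo n) < Φ x + 1 / levelScale p n ^ 2 := by
  have := profileSlope_pos hp hp1 hp2
  refine ⟨(|x| + 1) / profileSlope p + 1, by positivity, ?_⟩
  filter_upwards [eventually_ne_atTop 0, eventually_exists_le_wordAvg hp hp1 hp2 x,
    eventually_exists_wordAvg_lt hp hp1 hp2 x]
    with n hn ⟨a, ha, hxa⟩ ⟨b, hb, hbx⟩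
  replace hbx : wordAvg p b (atLeastTwo n) < Φ x + 1 / levelScale p n ^ 2 :=
    hbx.trans_le (le_add_of_nonneg_right (by positivity))
  have hab : a < b := (antitone_wordAvg_atLeastTwo hn hp.le hp1.le).reflect_lt (hbx.trans_le hxa)
  obtain ⟨k, hak, hkb, hkx, hxk⟩ :=
    exists_ge_and_succ_lt (f := fun k ↦ wordAvg p k (atLeastTwo n)) hab.le hxa hbx
  have hwindow (l : ℕ) (hal : a ≤ l) (hlb : l ≤ b) :
      |l - levelScale p n ^ 2| ≤ ((|x| + 1) / profileSlope p + 1) * levelScale p n := by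
    have : (a : ℝ) ≤ l := Nat.cast_le.2 hal
    have : (l : ℝ) ≤ b := Nat.cast_le.2 hlb
    rw [abs_le] at ha hb ⊢
    constructor <;> linarith
  exact ⟨k, hwindow k hak hkb.le, hwindow (k + 1) (by omega) hkb, hkx, hxk⟩

lemma abs_sub_level_eq {n : ℕ} (hw : 0 < levelScale p n) (hs : 0 < profileSlope p) (k : ℕ) :
    |k - (levelScale p n ^ 2 - x / profileSlope p * levelScale p n)| =
      |normalArg p n k - x| * (levelScale p n / profileSlope p) := by
  have hgap : levelScale p n ^ 2 - x / profileSlope p * levelScale p n - k =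
      (normalArg p n k - x) * (levelScale p n / profileSlope p) := by
    rw [normalArg]
    field_simp
    ring
  rw [abs_sub_comm, hgap, abs_mul, abs_of_pos (div_pos hw hs)]

lemma abs_normalArg_sub_le_of_abs_cdf_sub_le {n k : ℕ} {Y ε : ℝ} (hk : |normalArg p n k| ≤ Y)
    (hx : |x| ≤ Y) (h : |Φ (normalArg p n k) - Φ x| ≤ ε) : |normalArg p n k - x| ≤ ε / φ Y :=
  (le_div_iff₀' (stdGaussianPDF_pos Y)).2 ((mul_abs_sub_le_abs_cdf_stdGaussian_sub hk hx).trans h)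

lemma exists_abs_sub_level_le (hp : 0 < p) (hp1 : p < 1) (hp2 : p ≠ 1 / 2) (x : ℝ) {A B : ℝ}
    (hA : 0 ≤ A) (hB : 0 < B) :
    ∃ C > 0, ∀ᶠ n in atTop, ∀ k : ℕ, |k - levelScale p n ^ 2| ≤ A * levelScale p n →
      |wordAvg p k (atLeastTwo n) - Φ x| ≤ B / levelScale p n →
      |k - (levelScale p n ^ 2 - x / profileSlope p * levelScale p n)| ≤ C := by
  have hs := profileSlope_pos hp hp1 hp2
  obtain ⟨C, hC, hprofile⟩ := exists_abs_wordAvg_sub_cdf_normalArg_le hp hp1 hp2 hA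
  have hφ := stdGaussianPDF_pos (profileSlope p * A + |x|)
  refine ⟨(C + B) / φ (profileSlope p * A + |x|) / profileSlope p, by positivity, ?_⟩
  filter_upwards [hprofile, (tendsto_levelScale hp hp1).eventually_gt_atTop 0] with n hn hw k hk hkx
  have hcdf : |Φ (normalArg p n k) - Φ x| ≤ (C + B) / levelScale p n := by
    rw [add_div]
    refine (abs_sub_le _ (wordAvg p k (atLeastTwo n)) _).trans (add_le_add ?_ hkx)
    rw [abs_sub_comm]
    exact hn k hk
  have harg := abs_normalArg_sub_le_of_abs_cdf_sub_le
    (le_add_of_le_of_nonneg (abs_normalArg_le hw hs hk) (abs_nonneg x))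
    (le_add_of_nonneg_left (by positivity)) hcdf
  rw [abs_sub_level_eq hw hs]
  calc _ ≤ (C + B) / levelScale p n / φ (profileSlope p * A + |x|) *
        (levelScale p n / profileSlope p) := by gcongr
    _ = _ := by field_simp

lemma exists_abs_wordAvg_sub_cdf_le_of_straddling (hp : 0 < p) (hp1 : p < 1) (hp2 : p ≠ 1 / 2)
    (x : ℝ) {A : ℝ} (hA : 0 ≤ A) :
    ∃ C > 0, ∀ᶠ n in atTop, ∀ k : ℕ, |k - levelScale p n ^ 2| ≤ A * levelScale p n →
      |(k + 1 : ℕ) - levelScale p n ^ 2| ≤ A * levelScale p n →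
      Φ x + 1 / levelScale p n ^ 2 ≤ wordAvg p k (atLeastTwo n) →
      wordAvg p (k + 1) (atLeastTwo n) < Φ x + 1 / levelScale p n ^ 2 →
      |wordAvg p k (atLeastTwo n) - Φ x| ≤ C / levelScale p n := by
  have hs := profileSlope_pos hp hp1 hp2
  obtain ⟨C, hC, hprofile⟩ := exists_abs_wordAvg_sub_cdf_normalArg_le hp hp1 hp2 hA
  refine ⟨C + profileSlope p + C + 1, by positivity, ?_⟩
  filter_upwards [hprofile, (tendsto_levelScale hp hp1).eventually_ge_atTop 1]
    with n hn hw1 k hk hk1 hxk hkx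
  have hw : 0 < levelScale p n := by linarith
  have hinv : 0 < 1 / levelScale p n ^ 2 := by positivity
  have hinv2 : 1 / levelScale p n ^ 2 ≤ 1 / levelScale p n := by
    gcongr
    exact le_self_pow₀ hw1 two_ne_zero
  have hstep : |Φ (normalArg p n k) - Φ (normalArg p n (k + 1))| ≤
      profileSlope p / levelScale p n := by
    refine (abs_cdf_stdGaussian_sub_le _ _).trans_eq ?_
    rw [abs_normalArg_sub hw hs, Nat.cast_succ, sub_add_cancel_left, abs_neg, abs_one, mul_one]
  rw [abs_of_nonneg (by linarith), add_div, add_div, add_div]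
  linarith [(abs_le.1 (hn k hk)).2, (abs_le.1 hstep).2, (abs_le.1 (hn _ hk1)).1]

lemma exists_localized_level (hp : 0 < p) (hp1 : p < 1) (hp2 : p ≠ 1 / 2) (x : ℝ) :
    ∃ C > 0, ∀ᶠ n in atTop, ∃ k : ℕ,
      |k - (levelScale p n ^ 2 - x / profileSlope p * levelScale p n)| ≤ C ∧
      |wordAvg p k (atLeastTwo n) - Φ x| ≤ C / levelScale p n ∧
      Φ x + 1 / levelScale p n ^ 2 ≤ wordAvg p k (atLeastTwo n) ∧
      wordAvg p (k + 2) (atLeastTwo n) ≤ Φ x - 1 / levelScale p n ^ 2 ∧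
      levelScale p n ^ 2 / 2 ≤ k := by
  obtain ⟨A, hA, hstraddle⟩ := exists_level_straddling hp hp1 hp2 x
  obtain ⟨B, hB, hmean⟩ := exists_abs_wordAvg_sub_cdf_le_of_straddling hp hp1 hp2 x hA
  obtain ⟨C, hC, hlevel⟩ := exists_abs_sub_level_le hp hp1 hp2 x hA hB
  obtain ⟨c, hc, hdrop⟩ := exists_div_levelScale_le_wordAvg_sub_succ hp hp1 hp2 hA
  have hscale := tendsto_levelScale hp hp1
  refine ⟨B + C, by positivity, ?_⟩
  filter_upwards [hstraddle, hmean, hlevel, hdrop, hscale.eventually_gt_atTop 0,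
    hscale.eventually_ge_atTop (2 / c), hscale.eventually_ge_atTop (2 * A)]
    with n ⟨k, hk, hk1, hxk, hkx⟩ hmean hlevel hdrop hw hwc hwA
  have hmean := hmean k hk hk1 hxk hkx
  refine ⟨k, (hlevel k hk hmean).trans (by linarith), hmean.trans ?_, hxk, ?_, ?_⟩
  · gcongr
    linarith
  · have hdrop := hdrop (k + 1) hk1
    have hgap : 2 * (1 / levelScale p n ^ 2) ≤ c / levelScale p n :=
      calc 2 * (1 / levelScale p n ^ 2) = 2 / levelScale p n / levelScale p n := by field_simp
        _ ≤ c / levelScale p n := by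
          gcongr
          exact (div_le_comm₀ hc hw).1 hwc
    linarith
  · nlinarith [(abs_le.1 hk).1]

end Localization

section Assembly

variable {p α C : ℝ} {ν : Measure (ℕ → ℕ → Bool)} {kn : ℕ → ℕ}

lemma logb_sub_eq_levelScale (hp : 0 < p) (hp1 : p < 1) (x : ℝ) (n : ℕ) :
    logb (1 / √(p * (1 - p))) n -
        |log (p / (1 - p))| / (2 * log (1 / √(p * (1 - p))) ^ ((3 : ℝ) / 2)) * x * √(log n) =
      levelScale p n ^ 2 - x / profileSlope p * levelScale p n := by
  have hL := decayRate_pos hp hp1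
  have hpow : decayRate p ^ ((3 : ℝ) / 2) = decayRate p * √(decayRate p) := by
    rw [show (3 : ℝ) / 2 = 1 + 1 / 2 by norm_num, rpow_add hL, rpow_one, ← sqrt_eq_rpow]
  rw [← decayRate, ← absLogOdds, hpow, sq_levelScale hp hp1, logb, ← decayRate, levelScale,
    profileSlope, sqrt_div (log_natCast_nonneg n)]
  field_simp

lemma sqrt_logb_two_eq (hp : 0 < p) (hp1 : p < 1) (n : ℕ) :
    √(logb 2 n) = √(decayRate p / log 2) * levelScale p n := by
  have hL := decayRate_pos hp hp1
  rw [levelScale, ← sqrt_mul (div_nonneg hL.le (log_nonneg one_le_two)), logb]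
  congr 1
  field_simp

lemma exists_forall_le_of_eventually_le {f : ℕ → ℝ} (h : ∀ᶠ n in atTop, f n ≤ C) :
    ∃ B, ∀ n, f n ≤ B := by
  obtain ⟨B, hB⟩ := (isBoundedUnder_of_eventually_le h).bddAbove_range
  exact ⟨B, fun n ↦ hB (Set.mem_range_self n)⟩

lemma tendsto_natCast_sq_div_two_pow : Tendsto (fun k : ℕ ↦ (k : ℝ) ^ 2 / 2 ^ k) atTop (nhds 0) :=
  tendsto_pow_const_div_const_pow_of_one_lt 2 one_lt_two

lemma _root_.IIDBits.tendsto_measure_fillupLevel (hν : IIDBits p ν) (hp : 0 < p) (hp1 : p < 1)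
    (hlow : ∀ᶠ n in atTop, levelScale p n ^ 2 / 2 ≤ kn n)
    (hkn : ∀ᶠ n in atTop, α + 1 / levelScale p n ^ 2 ≤ wordAvg p (kn n) (atLeastTwo n))
    (hkn2 : ∀ᶠ n in atTop, wordAvg p (kn n + 2) (atLeastTwo n) ≤ α - 1 / levelScale p n ^ 2) :
    Tendsto (fun n ↦ ν {ω | fillupLevel α ω n = kn n ∨ fillupLevel α ω n = kn n + 1})
      atTop (nhds 1) := by
  have := hν.1
  have hscale := tendsto_levelScale hp hp1
  have hkn_atTop : Tendsto kn atTop atTop := by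
    rw [← tendsto_natCast_atTop_iff (R := ℝ)]
    exact tendsto_atTop_mono' atTop hlow
      (((tendsto_pow_atTop two_ne_zero).comp hscale).atTop_div_const two_pos)
  have hlim : Tendsto (fun n ↦ 1 - 8 * ((kn n : ℝ) ^ 2 / 2 ^ kn n)) atTop (nhds 1) := by
    simpa only [mul_zero, sub_zero, Function.comp_apply] using
      ((tendsto_natCast_sq_div_two_pow.comp hkn_atTop).const_mul 8).const_sub 1
  have hreal : Tendsto
      (fun n ↦ ν.real {ω | fillupLevel α ω n = kn n ∨ fillupLevel α ω n = kn n + 1})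
      atTop (nhds 1) := by
    refine tendsto_of_tendsto_of_tendsto_of_le_of_le' hlim tendsto_const_nhds ?_
      (Eventually.of_forall fun n ↦ measureReal_le_one)
    filter_upwards [hlow, hkn, hkn2, hscale.eventually_gt_atTop 0] with n hlow hkn hkn2 hw
    refine le_trans ?_ (hν.measureReal_fillupLevel_ge hp.le hp1.le (by positivity) hkn hkn2)
    have hsq : (levelScale p n ^ 2) ^ 2 ≤ (2 * kn n) ^ 2 := by
      gcongr
      linarith
    calc 1 - 8 * ((kn n : ℝ) ^ 2 / 2 ^ kn n) = 1 - 2 * (2 * kn n) ^ 2 / 2 ^ kn n := by ring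
      _ ≤ 1 - 2 * (levelScale p n ^ 2) ^ 2 / 2 ^ kn n := by gcongr
      _ = 1 - 2 / (2 ^ kn n * (1 / levelScale p n ^ 2) ^ 2) := by field_simp
  simpa only [ENNReal.ofReal_one] using
    (ENNReal.tendsto_ofReal hreal).congr fun n ↦ ofReal_measureReal

lemma _root_.IIDBits.exists_abs_integral_fracFilled_sub_le (hν : IIDBits p ν) (hp : 0 < p)
    (hp1 : p < 1)
    (hmean : ∀ᶠ n in atTop, |wordAvg p (kn n) (atLeastTwo n) - α| ≤ C / levelScale p n) :
    ∃ B, ∀ n, 2 ≤ n → |∫ ω, fracFilled ω n (kn n) ∂ν - α| ≤ B / √(logb 2 n) := by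
  obtain ⟨B, hB⟩ : ∃ B, ∀ n, |wordAvg p (kn n) (atLeastTwo n) - α| * √(logb 2 n) ≤ B := by
    refine exists_forall_le_of_eventually_le (C := C * √(decayRate p / log 2)) ?_
    filter_upwards [hmean, (tendsto_levelScale hp hp1).eventually_gt_atTop 0] with n hn hw
    calc _ ≤ C / levelScale p n * √(logb 2 n) := by gcongr
      _ = C * √(decayRate p / log 2) := by
        rw [sqrt_logb_two_eq hp hp1]
        field_simp
  refine ⟨B, fun n hn ↦ ?_⟩
  have hlogb : 0 < logb 2 n := logb_pos one_lt_two (by exact_mod_cast hn)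
  rw [hν.integral_fracFilled hp.le hp1.le, le_div_iff₀ (sqrt_pos.2 hlogb)]
  exact hB n

end Assembly

end Fillup

/-- Theorem 1 of Janson–Szpankowski, second part: for `p ≠ 1/2`, with `k_n` the integers
from the two-point concentration of `F_n(α)`, one has `E X̄_{k_n} = α + O(1/√(log n))`. -/
theorem expectation_fracFilled_at_kn
    (p q α : ℝ) (hp : 0 < p) (hp1 : p < 1) (hp2 : p ≠ 1 / 2) (hq : q = 1 - p)
    (hα : 0 < α) (hα1 : α < 1)
    (ν : Measure (ℕ → ℕ → Bool)) (hν : IIDBits p ν)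
    (xα : ℝ) (hxα : ProbabilityTheory.cdf (ProbabilityTheory.gaussianReal 0 1) xα = α) :
    ∃ C > (0 : ℝ), ∃ kn : ℕ → ℕ,
      (∀ n : ℕ, 2 ≤ n →
        |(kn n : ℝ) -
            (Real.logb (1 / Real.sqrt (p * q)) n -
              |Real.log (p / q)| / (2 * Real.log (1 / Real.sqrt (p * q)) ^ ((3 : ℝ) / 2))
                * xα * Real.sqrt (Real.log n))| ≤ C) ∧
      Tendsto
        (fun n : ℕ =>
          ν {ω | fillupLevel α ω n = kn n ∨ fillupLevel α ω n = kn n + 1})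
        atTop (nhds 1) ∧
      (∀ n : ℕ, 2 ≤ n →
        |(∫ ω, fracFilled ω n (kn n) ∂ν) - α| ≤ C / Real.sqrt (Real.logb 2 n)) := by
  subst hq hxα
  obtain ⟨C, -, hlevel⟩ := Fillup.exists_localized_level hp hp1 hp2 xα
  obtain ⟨kn, hkn⟩ := hlevel.choice
  simp only [eventually_and] at hkn
  obtain ⟨hformula, hmean, hge, hle, hlow⟩ := hkn
  obtain ⟨B₁, hB₁⟩ := Fillup.exists_forall_le_of_eventually_le hformula
  obtain ⟨B₂, hB₂⟩ := hν.exists_abs_integral_fracFilled_sub_le hp hp1 hmean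
  refine ⟨max 1 (max B₁ B₂), by positivity, kn, fun n _ ↦ ?_,
    hν.tendsto_measure_fillupLevel hp hp1 hlow hge hle, fun n hn ↦ (hB₂ n hn).trans ?_⟩
  · rw [Fillup.logb_sub_eq_levelScale hp hp1]
    exact (hB₁ n).trans (by simp)
  · gcongr
    simp
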